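/- Let c > 0, d > 0 and 0 < q < 1 < p. Assume Ω admits a normalized first Dirichlet eigenpair (λ₁, φ₁) and a torsion function ξ. Then there exists a positive number μ₀ such that for every μ ∈ (0, μ₀) the Kirchhoff–Carrier problem −(1 + c‖u‖_2² + d‖∇u‖_2²) Δu = μ u^q + u^p in Ω, u > 0 in Ω, u = 0 on ∂Ω has at least one classical solution. -/

import Mathlib

open MeasureTheory Set Real
open scoped ENNReal NNReal

noncomputable section

/-- The Laplacian of `u : ℝ^N → ℝ`, as the sum of second partial derivatives. -/
def lapl {N : ℕ} (u : EuclideanSpace ℝ (Fin N) → ℝ) (x : EuclideanSpace ℝ (Fin N)) : ℝ :=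
  ∑ i : Fin N, fderiv ℝ (fun y => fderiv ℝ u y (EuclideanSpace.single i 1)) x
    (EuclideanSpace.single i 1)

/-- The `L^p` norm of `u` on `Ω`. -/
def LpNorm {N : ℕ} (Ω : Set (EuclideanSpace ℝ (Fin N))) (p : ℝ≥0∞)
    (u : EuclideanSpace ℝ (Fin N) → ℝ) : ℝ :=
  (eLpNorm u p (volume.restrict Ω)).toReal

/-- The `L²` norm of the gradient of `u` on `Ω`. -/
def gradNorm2 {N : ℕ} (Ω : Set (EuclideanSpace ℝ (Fin N)))
    (u : EuclideanSpace ℝ (Fin N) → ℝ) : ℝ :=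
  (eLpNorm (fun x => gradient u x) 2 (volume.restrict Ω)).toReal

/-- A torsion function of `Ω`: `ξ ∈ C(Ω̄) ∩ C²(Ω)`, `ξ ≥ 0` in `Ω`, `-Δξ = 1` in `Ω`,
`ξ = 0` on `∂Ω`. -/
def IsTorsionFn {N : ℕ} (Ω : Set (EuclideanSpace ℝ (Fin N)))
    (ξ : EuclideanSpace ℝ (Fin N) → ℝ) : Prop :=
  ContinuousOn ξ (closure Ω) ∧ ContDiffOn ℝ 2 ξ Ω ∧ (∀ x ∈ Ω, 0 ≤ ξ x) ∧
    (∀ x ∈ Ω, -lapl ξ x = 1) ∧ (∀ x ∈ frontier Ω, ξ x = 0)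

/-- A normalized first Dirichlet eigenpair of `Ω`: `λ₁ > 0`, `φ₁ ∈ C(Ω̄) ∩ C²(Ω)`, `φ₁ > 0`
in `Ω`, `-Δφ₁ = λ₁ φ₁` in `Ω`, `φ₁ = 0` on `∂Ω`, and `max_{Ω̄} φ₁ = 1`. -/
def IsFirstEigenpair {N : ℕ} (Ω : Set (EuclideanSpace ℝ (Fin N)))
    (l : ℝ) (φ₁ : EuclideanSpace ℝ (Fin N) → ℝ) : Prop :=
  0 < l ∧ ContinuousOn φ₁ (closure Ω) ∧ ContDiffOn ℝ 2 φ₁ Ω ∧ (∀ x ∈ Ω, 0 < φ₁ x) ∧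
    (∀ x ∈ Ω, -lapl φ₁ x = l * φ₁ x) ∧ (∀ x ∈ frontier Ω, φ₁ x = 0) ∧
    IsGreatest (φ₁ '' closure Ω) 1

section Aux

open Filter Topology
open scoped ContDiff InnerProductSpace

/-- shorthand for the Euclidean space -/
abbrev ES (N : ℕ) := EuclideanSpace ℝ (Fin N)

/-! ### The kernels -/

def kap0 {N : ℕ} (y : ES N) : ℝ := expNegInvGlue (1 - ‖y‖ ^ 2)

def rho0 {N : ℕ} (y : ES N) : ℝ := 2 * deriv expNegInvGlue (1 - ‖y‖ ^ 2)

def kZ (N : ℕ) : ℝ := ∫ y : ES N, rho0 y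

def kap {N : ℕ} (y : ES N) : ℝ := (kZ N)⁻¹ * kap0 y

def rho {N : ℕ} (y : ES N) : ℝ := (kZ N)⁻¹ * rho0 y

lemma expNeg_contDiff : ContDiff ℝ ∞ expNegInvGlue := expNegInvGlue.contDiff (n := ⊤)

lemma expNeg_deriv_contDiff : ContDiff ℝ ∞ (deriv expNegInvGlue) :=
  (contDiff_infty_iff_deriv.1 expNeg_contDiff).2

lemma expNeg_deriv_nonneg (s : ℝ) : 0 ≤ deriv expNegInvGlue s :=
  expNegInvGlue.monotone.deriv_nonneg

lemma expNeg_deriv_zero {s : ℝ} (hs : s ≤ 0) : deriv expNegInvGlue s = 0 := by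
  have h : ∀ t < (0 : ℝ), deriv expNegInvGlue t = 0 := by
    intro t ht
    have : expNegInvGlue =ᶠ[𝓝 t] fun _ => 0 := by
      filter_upwards [Iio_mem_nhds ht] with r hr
      exact expNegInvGlue.zero_of_nonpos (le_of_lt hr)
    rw [this.deriv_eq]; simp
  rcases hs.lt_or_eq with h1 | h1
  · exact h s h1
  · subst h1
    have hc : Tendsto (deriv expNegInvGlue) (𝓝[<] 0) (𝓝 (deriv expNegInvGlue 0)) :=
      (expNeg_deriv_contDiff.continuous.tendsto 0).mono_left nhdsWithin_le_nhds
    have h2 : Tendsto (deriv expNegInvGlue) (𝓝[<] 0) (𝓝 0) := by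
      apply tendsto_const_nhds.congr'
      filter_upwards [self_mem_nhdsWithin] with r hr
      exact (h r hr).symm
    exact tendsto_nhds_unique hc h2

variable {N : ℕ}

lemma kap0_contDiff : ContDiff ℝ ∞ (kap0 : ES N → ℝ) :=
  expNeg_contDiff.comp (contDiff_const.sub (contDiff_norm_sq ℝ))

lemma rho0_contDiff : ContDiff ℝ ∞ (rho0 : ES N → ℝ) :=
  contDiff_const.mul (expNeg_deriv_contDiff.comp (contDiff_const.sub (contDiff_norm_sq ℝ)))

lemma rho0_nonneg (y : ES N) : 0 ≤ rho0 y :=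
  mul_nonneg (by norm_num) (expNeg_deriv_nonneg _)

lemma kap0_nonneg (y : ES N) : 0 ≤ kap0 y := expNegInvGlue.nonneg _

lemma rho0_zero {y : ES N} (hy : 1 ≤ ‖y‖) : rho0 y = 0 := by
  unfold rho0
  rw [expNeg_deriv_zero (by nlinarith)]; simp

lemma kap0_zero {y : ES N} (hy : 1 ≤ ‖y‖) : kap0 y = 0 :=
  expNegInvGlue.zero_of_nonpos (by nlinarith)

lemma kap_contDiff : ContDiff ℝ ∞ (kap : ES N → ℝ) := contDiff_const.mul kap0_contDiff
lemma rho_contDiff : ContDiff ℝ ∞ (rho : ES N → ℝ) := contDiff_const.mul rho0_contDiff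
lemma kap_cont : Continuous (kap : ES N → ℝ) := kap_contDiff.continuous
lemma rho_cont : Continuous (rho : ES N → ℝ) := rho_contDiff.continuous
lemma rho_zero {y : ES N} (hy : 1 ≤ ‖y‖) : rho y = 0 := by simp [rho, rho0_zero hy]
lemma kap_zero {y : ES N} (hy : 1 ≤ ‖y‖) : kap y = 0 := by simp [kap, kap0_zero hy]

lemma cs_of_zero {F : Type*} [Zero F] {f : ES N → F} (h : ∀ y, 1 ≤ ‖y‖ → f y = 0) :
    HasCompactSupport f := by
  apply HasCompactSupport.intro (isCompact_closedBall (0 : ES N) 1)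
  intro x hx
  apply h
  simp at hx
  exact hx.le

lemma rho0_cs : HasCompactSupport (rho0 : ES N → ℝ) := cs_of_zero fun _ => rho0_zero
lemma rho_cs : HasCompactSupport (rho : ES N → ℝ) := cs_of_zero fun _ => rho_zero
lemma kap_cs : HasCompactSupport (kap : ES N → ℝ) := cs_of_zero fun _ => kap_zero

lemma rho_int : Integrable (rho : ES N → ℝ) := rho_cont.integrable_of_hasCompactSupport rho_cs
lemma kap_int : Integrable (kap : ES N → ℝ) := kap_cont.integrable_of_hasCompactSupport kap_cs

lemma rho_neg (y : ES N) : rho (-y) = rho y := by simp [rho, rho0]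
lemma kap_neg (y : ES N) : kap (-y) = kap y := by simp [kap, kap0]

lemma kZ_pos (hN : 1 ≤ N) : 0 < kZ N := by
  unfold kZ
  rw [integral_pos_iff_support_of_nonneg rho0_nonneg
    (rho0_contDiff.continuous.integrable_of_hasCompactSupport rho0_cs)]
  have hop : IsOpen (Function.support (rho0 : ES N → ℝ)) :=
    rho0_contDiff.continuous.isOpen_support
  refine hop.measure_pos volume ?_
  by_contra hne
  have hz : ∀ y : ES N, rho0 y = 0 := by
    intro y
    by_contra h
    exact hne ⟨y, h⟩
  have hd : ∀ s ∈ Icc (0:ℝ) 1, deriv expNegInvGlue s = 0 := by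
    intro s hs
    have := hz (EuclideanSpace.single (⟨0, hN⟩ : Fin N) (√(1 - s)))
    simp only [rho0, EuclideanSpace.norm_single, norm_eq_abs, sq_abs] at this
    rw [Real.sq_sqrt (by linarith [hs.2])] at this
    simpa using this
  have h2 : expNegInvGlue 1 = expNegInvGlue 0 := by
    obtain ⟨c, hc, hc'⟩ := exists_deriv_eq_slope expNegInvGlue (zero_lt_one)
      expNeg_contDiff.continuous.continuousOn
      (expNeg_contDiff.differentiable (by simp)).differentiableOn
    rw [hd c ⟨hc.1.le, hc.2.le⟩] at hc'
    simp at hc'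
    simp [hc'] 
    have := expNegInvGlue.pos_of_pos one_pos
    linarith
  have := expNegInvGlue.pos_of_pos one_pos
  simp [h2] at this

lemma rho_nonneg (hN : 1 ≤ N) (y : ES N) : 0 ≤ rho y :=
  mul_nonneg (inv_nonneg.2 (kZ_pos hN).le) (rho0_nonneg y)
lemma kap_nonneg (hN : 1 ≤ N) (y : ES N) : 0 ≤ kap y :=
  mul_nonneg (inv_nonneg.2 (kZ_pos hN).le) (kap0_nonneg y)

lemma rho_integral (hN : 1 ≤ N) : ∫ y : ES N, rho y = 1 := by
  unfold rho
  rw [integral_const_mul]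
  exact inv_mul_cancel₀ (kZ_pos hN).ne'

/-- half of the integral of `kap` -/
def kb (N : ℕ) : ℝ := (∫ y : ES N, kap y) / 2

lemma kb_pos (hN : 1 ≤ N) : 0 < kb N := by
  unfold kb
  apply half_pos
  rw [integral_pos_iff_support_of_nonneg (kap_nonneg hN) kap_int]
  refine kap_cont.isOpen_support.measure_pos volume ⟨0, ?_⟩
  simp only [Function.mem_support, kap, kap0]
  have := expNegInvGlue.pos_of_pos one_pos
  have := kZ_pos hN
  simp
  exact this.ne'

lemma kap_hasFDerivAt (y : ES N) :
    HasFDerivAt kap (-(rho y) • innerSL ℝ y) y := by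
  have h1 : HasFDerivAt (fun y : ES N => 1 - ‖y‖ ^ 2) (-((2:ℝ) • innerSL ℝ y)) y := by
    refine ((hasStrictFDerivAt_norm_sq y).hasFDerivAt.const_sub 1).congr_fderiv ?_
    ext e; simp
  have h2 := ((expNeg_contDiff.differentiable (by simp)).differentiableAt
    (x := 1 - ‖y‖ ^ 2)).hasDerivAt
  have h3 := (h2.comp_hasFDerivAt y h1).const_mul (kZ N)⁻¹
  refine h3.congr_fderiv ?_
  ext e
  simp [rho, rho0]
  ring

lemma kap_fderiv (y e : ES N) : fderiv ℝ kap y e = -(rho y * ⟪y, e⟫_ℝ) := by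
  rw [(kap_hasFDerivAt y).fderiv]; simp

lemma lapl_kap (y : ES N) : lapl kap y = -(N * rho y + fderiv ℝ rho y y) := by
  unfold lapl
  have hr : DifferentiableAt ℝ (rho : ES N → ℝ) y :=
    rho_contDiff.differentiable (by simp) y
  have : ∀ i : Fin N, fderiv ℝ (fun z : ES N => fderiv ℝ kap z (EuclideanSpace.single i 1)) y
      (EuclideanSpace.single i 1) = -(rho y + fderiv ℝ rho y (y i • EuclideanSpace.single i 1)) := by
    intro i
    have h1 : (fun z : ES N => fderiv ℝ kap z (EuclideanSpace.single i 1))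
        = fun z => -(rho z * z i) := by
      ext z; rw [kap_fderiv]; simp [EuclideanSpace.inner_single_right]
    rw [h1]
    have h2 : HasFDerivAt (fun z : ES N => z i) (EuclideanSpace.proj (𝕜 := ℝ) i) y :=
      (EuclideanSpace.proj (𝕜 := ℝ) i).hasFDerivAt
    have h3 : HasFDerivAt (fun z : ES N => -(rho z * z i))
      (-(rho y • EuclideanSpace.proj (𝕜 := ℝ) i + y i • fderiv ℝ rho y)) y :=
      (hr.hasFDerivAt.mul h2).neg
    rw [h3.fderiv]
    simp
  rw [Finset.sum_congr rfl fun i _ => this i]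
  rw [Finset.sum_neg_distrib, Finset.sum_add_distrib, ← map_sum]
  have h4 : ∑ i : Fin N, y i • EuclideanSpace.single i (1:ℝ) = y := by
    ext j
    simp [Finset.sum_apply, Pi.single_apply]
  rw [h4]
  simp


/-! ### Averages -/

/-- average against the kernel `k` at scale `t` -/
def Iv (k : ES N → ℝ) (t : ℝ) (w : ES N → ℝ) (x : ES N) : ℝ := ∫ y, k y * w (x + t • y)

abbrev Av (t : ℝ) (w : ES N → ℝ) (x : ES N) : ℝ := Iv rho t w x
abbrev Kv (t : ℝ) (w : ES N → ℝ) (x : ES N) : ℝ := Iv kap t w x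

/-- local potential -/
def Pv (t : ℝ) (g : ES N → ℝ) (x : ES N) : ℝ := ∫ s in (0:ℝ)..t, s * Kv s g x

structure Ker (k : ES N → ℝ) : Prop where
  cont : Continuous k
  zero : ∀ y, 1 ≤ ‖y‖ → k y = 0
  nn : ∀ y, 0 ≤ k y

lemma ker_rho (hN : 1 ≤ N) : Ker (rho : ES N → ℝ) := ⟨rho_cont, fun _ => rho_zero, rho_nonneg hN⟩
lemma ker_kap (hN : 1 ≤ N) : Ker (kap : ES N → ℝ) := ⟨kap_cont, fun _ => kap_zero, kap_nonneg hN⟩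

lemma Ker.cs {k : ES N → ℝ} (hk : Ker k) : HasCompactSupport k := cs_of_zero hk.zero
lemma Ker.int {k : ES N → ℝ} (hk : Ker k) : Integrable k :=
  hk.cont.integrable_of_hasCompactSupport hk.cs

/-- bounded measurable functions -/
def BM (w : ES N → ℝ) : Prop := Measurable w ∧ ∃ C, ∀ x, |w x| ≤ C

lemma BM.const (a : ℝ) : BM (fun _ : ES N => a) := ⟨measurable_const, |a|, fun _ => le_rfl⟩

lemma BM.add {w v : ES N → ℝ} (hw : BM w) (hv : BM v) : BM (fun x => w x + v x) := by
  obtain ⟨h1, C, hC⟩ := hw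
  obtain ⟨h2, D, hD⟩ := hv
  exact ⟨h1.add h2, C + D, fun x => (abs_add_le _ _).trans (add_le_add (hC x) (hD x))⟩

lemma BM.const_mul {w : ES N → ℝ} (hw : BM w) (a : ℝ) : BM (fun x => a * w x) := by
  obtain ⟨h1, C, hC⟩ := hw
  refine ⟨h1.const_mul a, |a| * C, fun x => ?_⟩
  rw [abs_mul]
  exact mul_le_mul_of_nonneg_left (hC x) (abs_nonneg a)

lemma Iv_integrable {k : ES N → ℝ} (hk : Ker k) {w : ES N → ℝ} (hw : BM w) (t : ℝ) (x : ES N) :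
    Integrable (fun y => k y * w (x + t • y)) := by
  obtain ⟨h1, C, hC⟩ := hw
  refine hk.int.mul_bdd (c := C) ?_ ?_
  · exact (h1.comp (by fun_prop)).aestronglyMeasurable
  · exact ae_of_all _ fun y => hC _

lemma mem_ball_of {x y : ES N} {t : ℝ} (ht : 0 ≤ t) (hy : ‖y‖ ≤ 1) :
    x + t • y ∈ Metric.closedBall x t := by
  simp [norm_smul, abs_of_nonneg ht]
  nlinarith

lemma Iv_congr {k : ES N → ℝ} (hk : Ker k) {w v : ES N → ℝ} {t : ℝ} (ht : 0 ≤ t) {x : ES N}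
    (h : ∀ z ∈ Metric.closedBall x t, w z = v z) : Iv k t w x = Iv k t v x := by
  unfold Iv
  congr 1
  ext y
  by_cases hy : 1 ≤ ‖y‖
  · simp [hk.zero y hy]
  · rw [h _ (mem_ball_of ht (not_le.1 hy).le)]

lemma Iv_mono {k : ES N → ℝ} (hk : Ker k) {w v : ES N → ℝ} (hw : BM w) (hv : BM v)
    {t : ℝ} (ht : 0 ≤ t) {x : ES N}
    (h : ∀ z ∈ Metric.closedBall x t, w z ≤ v z) : Iv k t w x ≤ Iv k t v x := by
  unfold Iv
  apply integral_mono (Iv_integrable hk hw t x) (Iv_integrable hk hv t x)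
  intro y
  by_cases hy : 1 ≤ ‖y‖
  · simp [hk.zero y hy]
  · exact mul_le_mul_of_nonneg_left (h _ (mem_ball_of ht (not_le.1 hy).le)) (hk.nn y)

lemma Iv_add {k : ES N → ℝ} (hk : Ker k) {w v : ES N → ℝ} (hw : BM w) (hv : BM v)
    (t : ℝ) (x : ES N) : Iv k t (fun z => w z + v z) x = Iv k t w x + Iv k t v x := by
  unfold Iv
  rw [← integral_add (Iv_integrable hk hw t x) (Iv_integrable hk hv t x)]
  congr 1; ext y; ring

lemma Iv_const_mul (k : ES N → ℝ) (w : ES N → ℝ) (a t : ℝ) (x : ES N) :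
    Iv k t (fun z => a * w z) x = a * Iv k t w x := by
  unfold Iv
  rw [← integral_const_mul]
  congr 1; ext y; ring

lemma Av_const (hN : 1 ≤ N) (a t : ℝ) (x : ES N) : Av t (fun _ => a) x = a := by
  unfold Av Iv
  rw [integral_mul_const, rho_integral hN, one_mul]

lemma Kv_const (a t : ℝ) (x : ES N) : Kv t (fun _ => a) x = 2 * kb N * a := by
  unfold Kv Iv
  rw [integral_mul_const, kb]; ring

lemma Iv_abs_le {k : ES N → ℝ} (hk : Ker k) {w : ES N → ℝ} {C : ℝ}
    (hC : ∀ x, |w x| ≤ C) (t : ℝ) (x : ES N) : |Iv k t w x| ≤ (∫ y, k y) * C := by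
  unfold Iv
  rw [← integral_mul_const, ← Real.norm_eq_abs]
  apply norm_integral_le_of_norm_le (hk.int.mul_const C)
  refine ae_of_all _ fun y => ?_
  rw [norm_mul, Real.norm_of_nonneg (hk.nn y)]
  exact mul_le_mul_of_nonneg_left (hC _) (hk.nn y)

lemma Iv_stronglyMeasurable {k : ES N → ℝ} (hk : Ker k) {w : ES N → ℝ} (hw : Measurable w) :
    StronglyMeasurable (fun q : ℝ × ES N => Iv k q.1 w q.2) := by
  unfold Iv
  have hm : Measurable (fun r : (ℝ × ES N) × ES N => k r.2 * w (r.1.2 + r.1.1 • r.2)) := by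
    have := hk.cont.measurable
    have h2 : Measurable (fun r : (ℝ × ES N) × ES N => r.1.2 + r.1.1 • r.2) := by fun_prop
    exact (this.comp measurable_snd).mul (hw.comp h2)
  exact hm.stronglyMeasurable.integral_prod_right'

lemma Iv_BM {k : ES N → ℝ} (hk : Ker k) {w : ES N → ℝ} (hw : BM w) (t : ℝ) : BM (Iv k t w) := by
  obtain ⟨h1, C, hC⟩ := hw
  refine ⟨?_, _, fun x => Iv_abs_le hk hC t x⟩
  exact (Iv_stronglyMeasurable hk h1).measurable.comp (measurable_const.prodMk measurable_id)

lemma Kv_intervalIntegrable (hN : 1 ≤ N) {g : ES N → ℝ} (hg : BM g) (x : ES N) (a b : ℝ) :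
    IntervalIntegrable (fun s => s * Kv s g x) volume a b := by
  obtain ⟨h1, C, hC⟩ := hg
  have hm : Measurable (fun s : ℝ => Kv s g x) :=
    (Iv_stronglyMeasurable (ker_kap hN) h1).measurable.comp
      (measurable_id.prodMk measurable_const)
  have h2 : IntervalIntegrable (fun s => Kv s g x) volume a b := by
    rw [intervalIntegrable_iff]
    exact Measure.integrableOn_of_bounded (by simp) hm.aestronglyMeasurable
      (M := (∫ y : ES N, kap y) * C) (ae_of_all _ fun s => Iv_abs_le (ker_kap hN) hC s x)
  exact h2.continuousOn_mul continuousOn_id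

lemma Pv_congr (hN : 1 ≤ N) {w v : ES N → ℝ} {t : ℝ} (ht : 0 ≤ t) {x : ES N}
    (h : ∀ z ∈ Metric.closedBall x t, w z = v z) : Pv t w x = Pv t v x := by
  unfold Pv
  apply intervalIntegral.integral_congr
  intro s hs
  rw [uIcc_of_le ht] at hs
  simp only
  rw [Kv, Kv, Iv_congr (ker_kap hN) hs.1
    (fun z hz => h z (Metric.closedBall_subset_closedBall hs.2 hz))]

lemma Pv_mono (hN : 1 ≤ N) {w v : ES N → ℝ} (hw : BM w) (hv : BM v) {t : ℝ} (ht : 0 ≤ t)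
    {x : ES N} (h : ∀ z ∈ Metric.closedBall x t, w z ≤ v z) : Pv t w x ≤ Pv t v x := by
  unfold Pv
  apply intervalIntegral.integral_mono_on ht (Kv_intervalIntegrable hN hw x 0 t)
    (Kv_intervalIntegrable hN hv x 0 t)
  intro s hs
  exact mul_le_mul_of_nonneg_left (Iv_mono (ker_kap hN) hw hv hs.1
    (fun z hz => h z (Metric.closedBall_subset_closedBall hs.2 hz))) hs.1

lemma Pv_const (a t : ℝ) (x : ES N) : Pv t (fun _ => a) x = kb N * a * t ^ 2 := by
  unfold Pv
  simp_rw [Kv_const]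
  rw [intervalIntegral.integral_mul_const, integral_id]
  ring

lemma Pv_add (hN : 1 ≤ N) {w v : ES N → ℝ} (hw : BM w) (hv : BM v)
    (t : ℝ) (x : ES N) : Pv t (fun z => w z + v z) x = Pv t w x + Pv t v x := by
  unfold Pv
  rw [← intervalIntegral.integral_add (Kv_intervalIntegrable hN hw x 0 t)
    (Kv_intervalIntegrable hN hv x 0 t)]
  congr 1; ext s
  rw [Kv, Iv_add (ker_kap hN) hw hv]; ring

lemma Pv_const_mul (w : ES N → ℝ) (a t : ℝ) (x : ES N) :
    Pv t (fun z => a * w z) x = a * Pv t w x := by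
  unfold Pv
  rw [← intervalIntegral.integral_const_mul]
  congr 1; ext s
  rw [Kv, Iv_const_mul]; ring

/-- change of variables -/
lemma Iv_eq (k : ES N → ℝ) {t : ℝ} (ht : 0 < t) (w : ES N → ℝ) (x : ES N) :
    Iv k t w x = (t ^ N)⁻¹ * ∫ z, k (t⁻¹ • (z - x)) * w z := by
  unfold Iv
  have h1 := Measure.integral_comp_smul (volume : Measure (ES N))
    (fun y => k (t⁻¹ • y) * w (x + y)) t
  have h2 : ∀ y : ES N, t⁻¹ • t • y = y := fun y => by
    rw [smul_smul, inv_mul_cancel₀ ht.ne', one_smul]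
  simp only [h2] at h1
  rw [h1]
  have h3 : ∫ z, k (t⁻¹ • (z - x)) * w z = ∫ y, k (t⁻¹ • y) * w (x + y) := by
    rw [← integral_add_left_eq_self (μ := (volume : Measure (ES N)))
      (fun z => k (t⁻¹ • (z - x)) * w z) x]
    simp
  rw [h3, finrank_euclideanSpace_fin, abs_of_pos (by positivity), smul_eq_mul]

/-- symmetry of the averaging operators -/
lemma Iv_symm {k : ES N → ℝ} (hk : Ker k) (hneg : ∀ y, k (-y) = k y) {w φ : ES N → ℝ} (hw : BM w)
    (hφc : Continuous φ) (hφ : HasCompactSupport φ) (t : ℝ) :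
    ∫ x, Iv k t w x * φ x = ∫ x, w x * Iv k t φ x := by
  have hφi : Integrable φ := hφc.integrable_of_hasCompactSupport hφ
  obtain ⟨hwm, C, hC⟩ := hw
  have e1 : ∀ x, Iv k t w x * φ x = ∫ y, k y * w (x + t • y) * φ x := fun x => by
    rw [integral_mul_const]; rfl
  have e2 : ∀ x, w x * Iv k t φ x = ∫ y, k y * (w x * φ (x + t • y)) := fun x => by
    unfold Iv
    rw [← integral_const_mul]; congr 1; ext y; ring
  simp_rw [e1, e2]
  have i1 : Integrable (fun q : ES N × ES N => k q.2 * w (q.1 + t • q.2) * φ q.1)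
      (volume.prod volume) := by
    have h0 := hφi.mul_prod hk.int
    have h1 : Integrable (fun q : ES N × ES N => (φ q.1 * k q.2) * w (q.1 + t • q.2))
      (volume.prod volume) := h0.mul_bdd (c := C)
        (hwm.comp (by fun_prop)).aestronglyMeasurable (ae_of_all _ fun _ => hC _)
    exact h1.congr (ae_of_all _ fun q => by ring)
  rw [integral_integral_swap i1]
  have e3 : ∀ y, ∫ x, k y * w (x + t • y) * φ x = ∫ x, k y * w x * φ (x - t • y) := by
    intro y
    rw [← integral_add_right_eq_self (μ := (volume : Measure (ES N)))
      (fun x => k y * w x * φ (x - t • y)) (t • y)]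
    simp
  simp_rw [e3]
  have e4 : ∫ y, ∫ x, k y * w x * φ (x - t • y) = ∫ y, ∫ x, k y * (w x * φ (x + t • y)) := by
    rw [← integral_neg_eq_self]
    congr 1; ext y; congr 1; ext x
    rw [hneg]; simp; ring
  rw [e4]
  have i2 : Integrable (fun q : ES N × ES N => k q.1 * (w q.2 * φ (q.2 + t • q.1)))
      (volume.prod volume) := by
    have h0 := hk.int.mul_prod hφi
    have hmp : MeasurePreserving (fun q : ES N × ES N => (q.1, q.2 + t • q.1))
        (volume.prod volume) (volume.prod volume) := by
      apply (MeasurePreserving.id (volume : Measure (ES N))).skew_product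
        (g := fun a b => b + t • a)
      · fun_prop
      · exact ae_of_all _ fun a => (measurePreserving_add_right volume (t • a)).map_eq
    have h1 := (hmp.integrable_comp h0.aestronglyMeasurable).2 h0
    have h2 := h1.mul_bdd (g := fun q : ES N × ES N => w q.2) (c := C)
      (hwm.comp measurable_snd).aestronglyMeasurable (ae_of_all _ fun _ => hC _)
    exact h2.congr (ae_of_all _ fun q => by simp; ring)
  rw [integral_integral_swap i2]

/-- commutation -/
lemma Iv_comm {k j : ES N → ℝ} (hk : Ker k) (hj : Ker j) {w : ES N → ℝ} (hw : BM w)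
    (s t : ℝ) (x : ES N) : Iv k s (Iv j t w) x = Iv j t (Iv k s w) x := by
  obtain ⟨hwm, C, hC⟩ := hw
  unfold Iv
  simp_rw [← integral_const_mul]
  have i1 : Integrable (fun q : ES N × ES N => k q.1 * (j q.2 * w (x + s • q.1 + t • q.2)))
      (volume.prod volume) := by
    have h0 := hk.int.mul_prod hj.int
    have h1 : Integrable (fun q : ES N × ES N => (k q.1 * j q.2) * w (x + s • q.1 + t • q.2))
      (volume.prod volume) := h0.mul_bdd (c := C)
        (hwm.comp (by fun_prop)).aestronglyMeasurable (ae_of_all _ fun _ => hC _)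
    exact h1.congr (ae_of_all _ fun q => by ring)
  rw [integral_integral_swap i1]
  congr 1; ext y; congr 1; ext z
  rw [add_right_comm]; ring


/-! ### Weak solutions -/

/-- very weak solutions of `-Δ w = g` in `Ω` -/
def WeakSol (Ω : Set (ES N)) (w g : ES N → ℝ) : Prop :=
  ∀ φ : ES N → ℝ, ContDiff ℝ ∞ φ → HasCompactSupport φ → tsupport φ ⊆ Ω →
    ∫ x, w x * lapl φ x = -∫ x, g x * φ x

lemma mul_cont_int {Ω : Set (ES N)} (hΩ : IsOpen Ω) {f ψ : ES N → ℝ} (hf : ContinuousOn f Ω)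
    (hψ : Continuous ψ) (hc : HasCompactSupport ψ) (hs : tsupport ψ ⊆ Ω) :
    Integrable (fun x => f x * ψ x) := by
  have h1 : Continuous (fun x => f x * ψ x) := by
    apply ContinuousOn.continuous_of_tsupport_subset (hf.mul hψ.continuousOn) hΩ
    exact (tsupport_mul_subset_right).trans hs
  exact h1.integrable_of_hasCompactSupport hc.mul_left

lemma fderiv_dir_tsupport (φ : ES N → ℝ) (e : ES N) :
    tsupport (fun x => fderiv ℝ φ x e) ⊆ tsupport φ := by
  refine closure_minimal ?_ (isClosed_tsupport φ)
  intro x hx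
  apply support_fderiv_subset ℝ
  intro h
  apply hx
  simp [h]

lemma fderiv_dir_cs {φ : ES N → ℝ} (hφ : HasCompactSupport φ) (e : ES N) :
    HasCompactSupport (fun x => fderiv ℝ φ x e) :=
  hφ.mono' ((subset_tsupport _).trans (fderiv_dir_tsupport φ e))

lemma fderiv_dir_contDiff {φ : ES N → ℝ} (hφ : ContDiff ℝ ∞ φ) (e : ES N) :
    ContDiff ℝ ∞ (fun x => fderiv ℝ φ x e) :=
  (hφ.fderiv_right (m := ∞) (by simp)).clm_apply contDiff_const

lemma fderiv_dir_contDiffOn {Ω : Set (ES N)} (hΩ : IsOpen Ω) {w : ES N → ℝ}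
    (hw : ContDiffOn ℝ 2 w Ω) (e : ES N) :
    ContDiffOn ℝ 1 (fun x => fderiv ℝ w x e) Ω :=
  (hw.fderiv_of_isOpen (m := 1) hΩ (by norm_num)).clm_apply contDiffOn_const

lemma lapl_cont {φ : ES N → ℝ} (hφ : ContDiff ℝ ∞ φ) : Continuous (lapl φ) := by
  unfold lapl
  exact continuous_finsetSum _ fun i _ =>
    (fderiv_dir_contDiff (fderiv_dir_contDiff hφ _) _).continuous

lemma lapl_tsupport (φ : ES N → ℝ) : Function.support (lapl φ) ⊆ tsupport φ := by
  intro x hx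
  by_contra h
  apply hx
  unfold lapl
  apply Finset.sum_eq_zero
  intro i _
  have : x ∉ tsupport (fun y => fderiv ℝ (fun y => fderiv ℝ φ y (EuclideanSpace.single i 1)) y
    (EuclideanSpace.single i 1)) := fun h' =>
    h (fderiv_dir_tsupport _ _ (fderiv_dir_tsupport _ _ h'))
  exact image_eq_zero_of_notMem_tsupport (f := fun y => fderiv ℝ (fun y => fderiv ℝ φ y
    (EuclideanSpace.single i 1)) y (EuclideanSpace.single i 1)) this

lemma lapl_cs {φ : ES N → ℝ} (hφ : HasCompactSupport φ) : HasCompactSupport (lapl φ) :=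
  hφ.mono' (lapl_tsupport φ)

lemma weak_of_C2 {Ω : Set (ES N)} (hΩ : IsOpen Ω) {w g : ES N → ℝ} (hw : ContDiffOn ℝ 2 w Ω)
    (hg : ∀ x ∈ Ω, -lapl w x = g x) : WeakSol Ω w g := by
  intro φ hφ hc hs
  have hgφ : ∫ x, g x * φ x = -∫ x, lapl w x * φ x := by
    rw [← integral_neg]
    congr 1; ext x
    by_cases hx : x ∈ Ω
    · rw [← hg x hx]; ring
    · rw [image_eq_zero_of_notMem_tsupport (fun h => hx (hs h))]; simp
  rw [hgφ, neg_neg]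
  unfold lapl
  simp_rw [Finset.mul_sum, Finset.sum_mul]
  have hwd : ∀ x ∈ Ω, DifferentiableAt ℝ w x := fun x hx =>
    (hw.differentiableOn (by norm_num)).differentiableAt (hΩ.mem_nhds hx)
  have hd1 : ∀ e, ContDiffOn ℝ 1 (fun x => fderiv ℝ w x e) Ω := fderiv_dir_contDiffOn hΩ hw
  have hd1d : ∀ e, ∀ x ∈ Ω, DifferentiableAt ℝ (fun x => fderiv ℝ w x e) x := fun e x hx =>
    ((hd1 e).differentiableOn (by norm_num)).differentiableAt (hΩ.mem_nhds hx)
  have hd2 : ∀ e, ContinuousOn (fun x => fderiv ℝ (fun x => fderiv ℝ w x e) x e) Ω := fun e =>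
    ((hd1 e).continuousOn_fderiv_of_isOpen hΩ (by norm_num)).clm_apply continuousOn_const
  have hφ1 := fderiv_dir_contDiff hφ
  have hφ2 := fun e => fderiv_dir_contDiff (hφ1 e) e
  have hi1 : ∀ e, Integrable (fun x => w x * fderiv ℝ (fun y => fderiv ℝ φ y e) x e) := fun e =>
    mul_cont_int hΩ hw.continuousOn (hφ2 e).continuous (fderiv_dir_cs (fderiv_dir_cs hc e) e)
      ((fderiv_dir_tsupport _ _).trans ((fderiv_dir_tsupport _ _).trans hs))
  have hi2 : ∀ e, Integrable (fun x => fderiv ℝ w x e * fderiv ℝ φ x e) := fun e =>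
    mul_cont_int hΩ (hd1 e).continuousOn (hφ1 e).continuous (fderiv_dir_cs hc e)
      ((fderiv_dir_tsupport _ _).trans hs)
  have hi3 : ∀ e, Integrable (fun x => fderiv ℝ (fun x => fderiv ℝ w x e) x e * φ x) := fun e =>
    mul_cont_int hΩ (hd2 e) hφ.continuous hc hs
  have hi4 : ∀ e, Integrable (fun x => w x * fderiv ℝ φ x e) := fun e =>
    mul_cont_int hΩ hw.continuousOn (hφ1 e).continuous (fderiv_dir_cs hc e)
      ((fderiv_dir_tsupport _ _).trans hs)
  have hi5 : ∀ e, Integrable (fun x => fderiv ℝ w x e * φ x) := fun e =>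
    mul_cont_int hΩ (hd1 e).continuousOn hφ.continuous hc hs
  rw [integral_finsetSum _ fun i _ => hi1 _, integral_finsetSum _ fun i _ => hi3 _]
  apply Finset.sum_congr rfl
  intro i _
  set e : ES N := EuclideanSpace.single i 1
  rw [integral_mul_fderiv_eq_neg_fderiv_mul_of_integrable (hi2 e) (hi1 e) (hi4 e)
    (fun x hx => hwd x (hs (fderiv_dir_tsupport _ _ hx)))
    (fun x _ => (hφ1 e).differentiable (by simp) x)]
  rw [integral_mul_fderiv_eq_neg_fderiv_mul_of_integrable (hi3 e) (hi2 e) (hi5 e)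
    (fun x hx => hd1d e x (hs hx))
    (fun x _ => hφ.differentiable (by simp) x)]
  simp

lemma fderiv_scale {f : ES N → ℝ} (hf : Differentiable ℝ f) (a : ℝ) (x z e : ES N) :
    fderiv ℝ (fun z => f (a • (z - x))) z e = a * fderiv ℝ f (a • (z - x)) e := by
  have h1 : HasFDerivAt (fun z : ES N => a • (z - x)) (a • ContinuousLinearMap.id ℝ (ES N)) z :=
    ((hasFDerivAt_id z).sub_const x).const_smul a
  have := (hf (a • (z - x))).hasFDerivAt.comp z h1
  rw [show (fun z => f (a • (z - x))) = f ∘ (fun z => a • (z - x)) from rfl, this.fderiv]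
  simp

lemma lapl_scale {f : ES N → ℝ} (hf : ContDiff ℝ ∞ f) (a : ℝ) (x z : ES N) :
    lapl (fun z => f (a • (z - x))) z = a ^ 2 * lapl f (a • (z - x)) := by
  unfold lapl
  rw [Finset.mul_sum]
  apply Finset.sum_congr rfl
  intro i _
  set e : ES N := EuclideanSpace.single i 1
  simp_rw [fderiv_scale (hf.differentiable (by simp))]
  have h2 := (fderiv_dir_contDiff hf e).differentiable (by simp)
  have h3 : DifferentiableAt ℝ (fun z => fderiv ℝ f (a • (z - x)) e) z :=
    (h2 _).comp z (by fun_prop : DifferentiableAt ℝ (fun z : ES N => a • (z - x)) z)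
  rw [fderiv_const_mul h3]
  have h4 := fderiv_scale h2 a x z e
  simp only [_root_.smul_apply, smul_eq_mul]
  rw [h4]; ring

lemma scale_zero {F : Type*} [Zero F] {f : ES N → F} (h : ∀ y, 1 ≤ ‖y‖ → f y = 0) {r : ℝ}
    (hr : 0 < r) {x z : ES N} (hz : z ∉ Metric.ball x r) : f (r⁻¹ • (z - x)) = 0 := by
  apply h
  rw [Metric.mem_ball, dist_eq_norm, not_lt] at hz
  rw [norm_smul, norm_inv, Real.norm_of_nonneg hr.le, inv_mul_eq_div, le_div_iff₀ hr]
  linarith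

lemma scale_tsupport {F : Type*} [Zero F] {f : ES N → F} (h : ∀ y, 1 ≤ ‖y‖ → f y = 0) {r : ℝ}
    (hr : 0 < r) (x : ES N) :
    tsupport (fun z => f (r⁻¹ • (z - x))) ⊆ Metric.closedBall x r := by
  refine closure_minimal ?_ Metric.isClosed_closedBall
  intro z hz
  by_contra h'
  exact hz (scale_zero h hr (fun h'' => h' (Metric.ball_subset_closedBall h'')))

lemma lapl_kap_zero (y : ES N) (hy : 1 ≤ ‖y‖) : lapl kap y = 0 := by
  have hs : tsupport (kap : ES N → ℝ) ⊆ Metric.closedBall 0 1 := by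
    have := scale_tsupport (f := (kap : ES N → ℝ)) (fun _ => kap_zero) one_pos 0
    simpa using this
  rcases hy.lt_or_eq with h | h
  · by_contra h'
    have := hs (lapl_tsupport _ h')
    simp at this
    linarith
  · have hc : ∀ z : ES N, 1 < ‖z‖ → lapl kap z = 0 := by
      intro z hz
      by_contra h'
      have := hs (lapl_tsupport _ h')
      simp at this
      linarith
    have hcont := (lapl_cont (kap_contDiff (N := N)))
    have hseq : Tendsto (fun n : ℕ => lapl kap ((1 + 1 / ((n : ℝ) + 1)) • y)) atTop
        (𝓝 (lapl kap y)) := by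
      have h1 : Tendsto (fun n : ℕ => (1 + 1 / ((n : ℝ) + 1)) • y) atTop (𝓝 y) := by
        have := (tendsto_one_div_add_atTop_nhds_zero_nat (𝕜 := ℝ)).const_add 1
        have := this.smul_const y
        simpa using this
      exact (hcont.tendsto y).comp h1
    have hz0 : ∀ n : ℕ, lapl kap ((1 + 1 / ((n : ℝ) + 1)) • y) = 0 := by
      intro n
      apply hc
      have : 0 < 1 / ((n : ℝ) + 1) := by positivity
      rw [norm_smul, ← h, Real.norm_of_nonneg (by positivity)]
      linarith
    simp_rw [hz0] at hseq
    exact (tendsto_nhds_unique hseq tendsto_const_nhds)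

lemma kern_hasDerivAt (x z : ES N) {r : ℝ} (hr : 0 < r) :
    HasDerivAt (fun r : ℝ => (r ^ N)⁻¹ * rho (r⁻¹ • (z - x)))
      ((r ^ (N + 1))⁻¹ * lapl kap (r⁻¹ • (z - x))) r := by
  have h1 : HasDerivAt (fun r : ℝ => r⁻¹ • (z - x)) (-(r ^ 2)⁻¹ • (z - x)) r :=
    (hasDerivAt_inv hr.ne').smul_const _
  have h2 := (rho_contDiff.differentiable (by simp) (r⁻¹ • (z - x))).hasFDerivAt.comp_hasDerivAt r h1
  have h3 : HasDerivAt (fun r : ℝ => (r ^ N)⁻¹) (-(N * r ^ (N - 1)) / (r ^ N) ^ 2) r :=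
    (hasDerivAt_pow N r).inv (by positivity)
  have h4 := h3.mul h2
  refine h4.congr_deriv ?_
  rw [lapl_kap]
  simp only [Function.comp, map_smul, smul_eq_mul]
  rcases N with _ | n
  · simp; field_simp
  · simp only [Nat.add_sub_cancel]
    field_simp
    ring

lemma Av_hasDerivAt {Ω : Set (ES N)} {w g : ES N → ℝ} (hw : BM w)
    (h : WeakSol Ω w g) {x : ES N} {r : ℝ} (hr : 0 < r) (hb : Metric.closedBall x r ⊆ Ω) :
    HasDerivAt (fun s => Av s w x) (-(r * Kv r g x)) r := by
  have hloc : (fun s => Av s w x) =ᶠ[𝓝 r]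
      fun s => ∫ z, (s ^ N)⁻¹ * rho (s⁻¹ • (z - x)) * w z := by
    filter_upwards [Ioi_mem_nhds hr] with s hs
    rw [Av, Iv_eq _ hs, ← integral_const_mul]
    simp_rw [mul_assoc]
  refine HasDerivAt.congr_of_eventuallyEq ?_ hloc
  obtain ⟨hwm, C, hC⟩ := hw
  have hC0 : 0 ≤ C := (abs_nonneg _).trans (hC x)
  obtain ⟨D, hD⟩ := (lapl_cont (kap_contDiff (N := N))).bounded_above_of_compact_support
    (lapl_cs kap_cs)
  have hD0 : 0 ≤ D := (norm_nonneg _).trans (hD x)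
  have key := hasDerivAt_integral_of_dominated_loc_of_deriv_le (μ := (volume : Measure (ES N)))
    (F := fun s z => (s ^ N)⁻¹ * rho (s⁻¹ • (z - x)) * w z)
    (F' := fun s z => (s ^ (N + 1))⁻¹ * lapl kap (s⁻¹ • (z - x)) * w z)
    (bound := (Metric.closedBall x (2 * r)).indicator
      (fun _ => ((r / 2) ^ (N + 1))⁻¹ * D * C)) (s := Ioo (r / 2) (2 * r)) (x₀ := r)
    (Ioo_mem_nhds (by linarith) (by linarith)) ?_ ?_ ?_ ?_ ?_ ?_
  · refine key.2.congr_deriv ?_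
    have hφ : ContDiff ℝ ∞ (fun z : ES N => kap (r⁻¹ • (z - x))) :=
      kap_contDiff.comp (by fun_prop)
    have hts := scale_tsupport (f := (kap : ES N → ℝ)) (fun _ => kap_zero) hr x
    have hcs : HasCompactSupport (fun z : ES N => kap (r⁻¹ • (z - x))) :=
      HasCompactSupport.of_support_subset_isCompact (isCompact_closedBall x r)
        ((subset_tsupport _).trans hts)
    have := h _ hφ hcs (hts.trans hb)
    simp_rw [lapl_scale kap_contDiff] at this
    rw [Kv, Iv_eq _ hr]
    have e1 : ∫ z, (r ^ (N + 1))⁻¹ * lapl kap (r⁻¹ • (z - x)) * w z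
        = ((r ^ (N + 1))⁻¹ * r ^ 2) * ∫ z, w z * (r⁻¹ ^ 2 * lapl kap (r⁻¹ • (z - x))) := by
      rw [← integral_const_mul]
      congr 1; ext z; field_simp
    rw [e1, this]
    have e2 : ∫ z, g z * kap (r⁻¹ • (z - x)) = ∫ z, kap (r⁻¹ • (z - x)) * g z := by
      congr 1; ext z; ring
    rw [e2, pow_succ]; field_simp
  · refine Eventually.of_forall fun s => ?_
    have : Measurable (fun z : ES N => rho (s⁻¹ • (z - x))) :=
      rho_cont.measurable.comp (by fun_prop)
    exact ((this.const_mul _).mul hwm).aestronglyMeasurable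
  · have h0 : Continuous (fun z : ES N => rho (r⁻¹ • (z - x))) := rho_cont.comp (by fun_prop)
    have hts := scale_tsupport (f := (rho : ES N → ℝ)) (fun _ => rho_zero) hr x
    have hcs : HasCompactSupport (fun z : ES N => rho (r⁻¹ • (z - x))) :=
      HasCompactSupport.of_support_subset_isCompact (isCompact_closedBall x r)
        ((subset_tsupport _).trans hts)
    exact ((h0.integrable_of_hasCompactSupport hcs).const_mul _).mul_bdd (c := C)
      hwm.aestronglyMeasurable (ae_of_all _ hC)
  · have : Measurable (fun z : ES N => lapl kap (r⁻¹ • (z - x))) :=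
      (lapl_cont kap_contDiff).measurable.comp (by fun_prop)
    exact ((this.const_mul _).mul hwm).aestronglyMeasurable
  · refine ae_of_all _ fun z s hs => ?_
    have hs0 : 0 < s := by linarith [hs.1]
    by_cases hz : z ∈ Metric.closedBall x (2 * r)
    · rw [indicator_of_mem hz, norm_mul, norm_mul]
      have h1 : ‖(s ^ (N + 1))⁻¹‖ ≤ ((r / 2) ^ (N + 1))⁻¹ := by
        rw [norm_inv, Real.norm_of_nonneg (by positivity)]
        apply inv_anti₀ (by positivity)
        exact pow_le_pow_left₀ (by positivity) hs.1.le _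
      exact mul_le_mul (mul_le_mul h1 (hD _) (norm_nonneg _) (by positivity)) (hC z)
        (norm_nonneg _) (by positivity)
    · rw [indicator_of_notMem hz, scale_zero lapl_kap_zero hs0]
      · simp
      · intro hz'
        apply hz
        rw [Metric.mem_closedBall]
        rw [Metric.mem_ball] at hz'
        linarith [hs.2]
  · exact (integrable_indicator_iff measurableSet_closedBall).2
      (integrableOn_const (by
        exact (measure_closedBall_lt_top).ne) (by exact enorm_ne_top))
  · refine ae_of_all _ fun z s hs => ?_
    exact (kern_hasDerivAt x z (by linarith [hs.1])).mul_const _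

lemma weak_const (hN : 1 ≤ N) {Ω : Set (ES N)} {w g : ES N → ℝ} (hw : BM w) (hg : BM g)
    (h : WeakSol Ω w g) {x : ES N} {s t : ℝ} (hs : 0 < s) (hst : s ≤ t)
    (hb : Metric.closedBall x t ⊆ Ω) :
    Av s w x + Pv s g x = Av t w x + Pv t g x := by
  have h1 := intervalIntegral.integral_eq_sub_of_hasDerivAt (a := s) (b := t)
    (f := fun s => Av s w x) (f' := fun r => -(r * Kv r g x)) ?_
    (Kv_intervalIntegrable hN hg x s t).neg
  · have h2 := intervalIntegral.integral_add_adjacent_intervals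
      (Kv_intervalIntegrable hN hg x 0 s) (Kv_intervalIntegrable hN hg x s t)
    rw [intervalIntegral.integral_neg] at h1
    unfold Pv
    linarith
  · intro r hr
    rw [uIcc_of_le hst] at hr
    exact Av_hasDerivAt hw h (lt_of_lt_of_le hs hr.1)
      ((Metric.closedBall_subset_closedBall hr.2).trans hb)

lemma Av_near (hN : 1 ≤ N) {w : ES N → ℝ} (hw : BM w) {t a ε : ℝ} (ht : 0 ≤ t) {x : ES N}
    (h : ∀ z ∈ Metric.closedBall x t, |w z - a| ≤ ε) : |Av t w x - a| ≤ ε := by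
  have h1 := Iv_mono (ker_rho hN) hw (BM.const (a + ε)) ht
    (fun z hz => by linarith [(abs_le.1 (h z hz)).2])
  have h2 := Iv_mono (ker_rho hN) (BM.const (a - ε)) hw ht
    (fun z hz => by linarith [(abs_le.1 (h z hz)).1])
  have e : ∀ c : ℝ, Iv rho t (fun _ => c) x = c := fun c => Av_const hN c t x
  rw [e] at h1 h2
  rw [abs_le]; constructor <;> linarith

lemma Pv_near (hN : 1 ≤ N) {w : ES N → ℝ} (hw : BM w) {t a ε : ℝ} (ht : 0 ≤ t) {x : ES N}
    (h : ∀ z ∈ Metric.closedBall x t, |w z - a| ≤ ε) :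
    |Pv t w x - kb N * a * t ^ 2| ≤ kb N * ε * t ^ 2 := by
  have h1 := Pv_mono hN hw (BM.const (a + ε)) ht
    (fun z hz => by linarith [(abs_le.1 (h z hz)).2])
  have h2 := Pv_mono hN (BM.const (a - ε)) hw ht
    (fun z hz => by linarith [(abs_le.1 (h z hz)).1])
  rw [Pv_const] at h1 h2
  rw [abs_le]; constructor <;> nlinarith

lemma Av_tendsto (hN : 1 ≤ N) {w : ES N → ℝ} (hw : BM w) {x : ES N} (hc : ContinuousAt w x) :
    Tendsto (fun t => Av t w x) (𝓝[>] 0) (𝓝 (w x)) := by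
  rw [Metric.tendsto_nhds]
  intro ε hε
  obtain ⟨δ, hδ, h⟩ := Metric.continuousAt_iff.1 hc (ε / 2) (by linarith)
  filter_upwards [Ioo_mem_nhdsGT hδ] with t ht
  have := Av_near hN hw ht.1.le (x := x) (a := w x) (ε := ε / 2) (fun z hz => by
    have := h (lt_of_le_of_lt hz ht.2)
    rw [Real.dist_eq] at this
    exact this.le)
  rw [Real.dist_eq]; linarith

lemma Pv_tendsto (hN : 1 ≤ N) {g : ES N → ℝ} (hg : BM g) (x : ES N) :
    Tendsto (fun t => Pv t g x) (𝓝[>] 0) (𝓝 0) := by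
  obtain ⟨hm, C, hC⟩ := hg
  have h1 : ∀ t : ℝ, 0 < t → |Pv t g x| ≤ kb N * C * t ^ 2 := fun t ht => by
    have := Pv_near hN ⟨hm, C, hC⟩ ht.le (x := x) (a := 0) (ε := C) (fun z _ => by simpa using hC z)
    simpa using this
  have h2 : Tendsto (fun t : ℝ => kb N * C * t ^ 2) (𝓝[>] 0) (𝓝 0) := by
    have : Continuous (fun t : ℝ => kb N * C * t ^ 2) := by fun_prop
    have := this.tendsto 0
    simp at this
    exact this.mono_left nhdsWithin_le_nhds
  apply squeeze_zero_norm' _ h2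
  filter_upwards [self_mem_nhdsWithin] with t ht
  exact h1 t ht

/-- mean value formulation of `-Δ w = g` in `Ω` -/
def MvSol (Ω : Set (ES N)) (w g : ES N → ℝ) : Prop :=
  ∀ x ∈ Ω, ∀ t > 0, Metric.closedBall x t ⊆ Ω → w x = Av t w x + Pv t g x

lemma mv_of_weak (hN : 1 ≤ N) {Ω : Set (ES N)} (hΩ : IsOpen Ω) {w g : ES N → ℝ} (hw : BM w)
    (hg : BM g) (hc : ContinuousOn w Ω) (h : WeakSol Ω w g) : MvSol Ω w g := by
  intro x hx t ht hb
  have h1 := (Av_tendsto hN hw (hc.continuousAt (hΩ.mem_nhds hx))).add (Pv_tendsto hN hg x)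
  have h2 : Tendsto (fun s => Av s w x + Pv s g x) (𝓝[>] 0) (𝓝 (Av t w x + Pv t g x)) := by
    apply tendsto_const_nhds.congr'
    filter_upwards [Ioo_mem_nhdsGT ht] with s hs
    exact (weak_const hN hw hg h hs.1 hs.2.le hb).symm
  have := tendsto_nhds_unique h1 h2
  linarith

lemma mv_of_C2 (hN : 1 ≤ N) {Ω : Set (ES N)} (hΩ : IsOpen Ω) {w g : ES N → ℝ} (hw : BM w)
    (hg : BM g) (h2 : ContDiffOn ℝ 2 w Ω) (h : ∀ x ∈ Ω, -lapl w x = g x) : MvSol Ω w g :=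
  mv_of_weak hN hΩ hw hg h2.continuousOn (weak_of_C2 hΩ h2 h)


/-! ### Regularity of averages -/

lemma BM.locInt {w : ES N → ℝ} (hw : BM w) : LocallyIntegrable w volume := by
  obtain ⟨h1, C, hC⟩ := hw
  exact (locallyIntegrable_const C).mono h1.aestronglyMeasurable
    (ae_of_all _ fun x => by
      rw [Real.norm_eq_abs, Real.norm_eq_abs]; exact (hC x).trans (le_abs_self C))

def flipK (k : ES N → ℝ) (t : ℝ) (y : ES N) : ℝ := k (-(t⁻¹ • y))

lemma flipK_contDiff {k : ES N → ℝ} (hk : ContDiff ℝ ∞ k) (t : ℝ) : ContDiff ℝ ∞ (flipK k t) :=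
  hk.comp (by fun_prop)

lemma flipK_cs {k : ES N → ℝ} (hk0 : ∀ y, 1 ≤ ‖y‖ → k y = 0) {t : ℝ} (ht : 0 < t) :
    HasCompactSupport (flipK k t) := by
  refine HasCompactSupport.intro (isCompact_closedBall (0 : ES N) t) fun y hy => hk0 _ ?_
  simp only [Metric.mem_closedBall, dist_zero_right, not_le] at hy
  rw [norm_neg, norm_smul, norm_inv, Real.norm_eq_abs, abs_of_pos ht, inv_mul_eq_div, one_le_div ht]
  exact hy.le

lemma flipK_fderiv {k : ES N → ℝ} (hk : ContDiff ℝ ∞ k) (t : ℝ) (y e : ES N) :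
    fderiv ℝ (flipK k t) y e = -t⁻¹ * fderiv ℝ k (-(t⁻¹ • y)) e := by
  have h := fderiv_scale (hk.differentiable (by simp)) (-t⁻¹) 0 y e
  have e1 : (fun z : ES N => k (-t⁻¹ • (z - 0))) = flipK k t := by
    ext z; simp [flipK]
  rw [e1] at h
  rw [h]
  simp

lemma Iv_conv (k : ES N → ℝ) {t : ℝ} (ht : 0 < t) (w : ES N → ℝ) (x : ES N) :
    Iv k t w x = (t ^ N)⁻¹ * (convolution w (flipK k t) (ContinuousLinearMap.mul ℝ ℝ) volume) x := by
  rw [Iv_eq k ht, convolution]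
  congr 2
  ext z
  have : -(t⁻¹ • (x - z)) = t⁻¹ • (z - x) := by rw [← smul_neg, neg_sub]
  simp [flipK, this, mul_comm]

lemma Iv_conv' (k : ES N → ℝ) {t : ℝ} (ht : 0 < t) (w : ES N → ℝ) (x : ES N) :
    Iv k t w x = (t ^ N)⁻¹ * (convolution (flipK k t) w (ContinuousLinearMap.mul ℝ ℝ) volume) x := by
  rw [Iv_eq k ht, convolution, ← integral_sub_left_eq_self _ volume x]
  congr 2
  ext z
  have : t⁻¹ • (x - z - x) = -(t⁻¹ • z) := by rw [← smul_neg]; congr 1; abel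
  simp [flipK]

lemma Iv_contDiff {k : ES N → ℝ} (hk : ContDiff ℝ ∞ k) (hk0 : ∀ y, 1 ≤ ‖y‖ → k y = 0)
    {t : ℝ} (ht : 0 < t) {w : ES N → ℝ} (hw : BM w) : ContDiff ℝ ∞ (Iv k t w) := by
  have h := HasCompactSupport.contDiff_convolution_right (μ := volume) (n := (⊤ : ℕ∞))
    (ContinuousLinearMap.mul ℝ ℝ) (flipK_cs hk0 ht) hw.locInt (flipK_contDiff hk t)
  have e : Iv k t w = fun x => (t ^ N)⁻¹ *
      (convolution w (flipK k t) (ContinuousLinearMap.mul ℝ ℝ) volume) x := by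
    ext x; exact Iv_conv k ht w x
  rw [e]
  exact contDiff_const.mul h

lemma Iv_fderiv {k : ES N → ℝ} (hk : ContDiff ℝ ∞ k) (hk0 : ∀ y, 1 ≤ ‖y‖ → k y = 0)
    {t : ℝ} (ht : 0 < t) {w : ES N → ℝ} (hw : BM w) (x e : ES N) :
    fderiv ℝ (Iv k t w) x e = -t⁻¹ * Iv (fun y => fderiv ℝ k y e) t w x := by
  have hg1 : ContDiff ℝ 1 (flipK k t) := (flipK_contDiff hk t).of_le (by simp)
  have h := HasCompactSupport.hasFDerivAt_convolution_right (μ := volume)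
    (ContinuousLinearMap.mul ℝ ℝ) (flipK_cs hk0 ht) hw.locInt hg1 x
  have e1 : Iv k t w = fun x => (t ^ N)⁻¹ *
      (convolution w (flipK k t) (ContinuousLinearMap.mul ℝ ℝ) volume) x := by
    ext x; exact Iv_conv k ht w x
  have h2 := h.const_mul ((t ^ N)⁻¹)
  rw [e1, h2.fderiv, smul_apply,
    convolution_precompR_apply _ hw.locInt ((flipK_cs hk0 ht).fderiv (𝕜 := ℝ))
      (hg1.continuous_fderiv (by simp)), Iv_conv _ ht]
  simp only [flipK_fderiv hk, smul_eq_mul, convolution, ContinuousLinearMap.mul_apply', flipK]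
  rw [mul_left_comm, ← integral_const_mul]
  rw [← integral_const_mul, ← integral_const_mul]
  refine integral_congr_ae (ae_of_all _ fun z => ?_)
  simp only []
  ring

lemma Iv_fderiv' {k : ES N → ℝ} (hk : Continuous k)
    {t : ℝ} (ht : 0 < t) {w : ES N → ℝ} (hw : ContDiff ℝ 1 w) (hwc : HasCompactSupport w)
    (x e : ES N) :
    fderiv ℝ (Iv k t w) x e = Iv k t (fun z => fderiv ℝ w z e) x := by
  have hl : LocallyIntegrable (flipK k t) volume := by
    refine Continuous.locallyIntegrable ?_
    unfold flipK
    fun_prop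
  have h := HasCompactSupport.hasFDerivAt_convolution_right (μ := volume)
    (ContinuousLinearMap.mul ℝ ℝ) hwc hl hw x
  have e1 : Iv k t w = fun x => (t ^ N)⁻¹ *
      (convolution (flipK k t) w (ContinuousLinearMap.mul ℝ ℝ) volume) x := by
    ext x; exact Iv_conv' k ht w x
  have h2 := h.const_mul ((t ^ N)⁻¹)
  rw [e1, h2.fderiv, smul_apply,
    convolution_precompR_apply _ hl (hwc.fderiv (𝕜 := ℝ))
      (hw.continuous_fderiv (by simp)), Iv_conv' _ ht]
  simp

lemma Iv_sm {k : ES N → ℝ} (hk : Continuous k) {w : ES N → ℝ} (hw : Measurable w) (x : ES N) :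
    StronglyMeasurable (fun s : ℝ => Iv k s w x) := by
  unfold Iv
  have hm : Measurable (fun r : ℝ × ES N => k r.2 * w (x + r.1 • r.2)) := by
    have := hk.measurable
    have h2 : Measurable (fun r : ℝ × ES N => x + r.1 • r.2) := by fun_prop
    exact (this.comp measurable_snd).mul (hw.comp h2)
  exact hm.stronglyMeasurable.integral_prod_right

/-- derivative of the integrand of `Pv` -/
lemma sKv_fderiv {s : ℝ} (hs : 0 < s) {g : ES N → ℝ} (hg : BM g) (x e : ES N) :
    fderiv ℝ (fun x => s * Kv s g x) x e = Iv (fun y => rho y * ⟪y, e⟫_ℝ) s g x := by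
  have hd : DifferentiableAt ℝ (Kv s g) x :=
    (Iv_contDiff kap_contDiff (fun _ => kap_zero) hs hg).differentiable (by simp) x
  rw [fderiv_const_mul hd, smul_apply,
    Iv_fderiv kap_contDiff (fun _ => kap_zero) hs hg]
  have : Iv (fun y : ES N => fderiv ℝ kap y e) s g x = - Iv (fun y => rho y * ⟪y, e⟫_ℝ) s g x := by
    unfold Iv
    rw [← integral_neg]
    congr 1; ext y; simp only [kap_fderiv]; ring
  rw [this, smul_eq_mul]
  field_simp

lemma sKv_fderiv_bound (hN : 1 ≤ N) {s : ℝ} (hs : 0 < s) {g : ES N → ℝ} (hg : BM g) {C : ℝ}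
    (hC0 : 0 ≤ C) (hC : ∀ x, |g x| ≤ C) (x : ES N) :
    ‖fderiv ℝ (fun x => s * Kv s g x) x‖ ≤ C := by
  refine ContinuousLinearMap.opNorm_le_bound _ hC0 fun e => ?_
  rw [sKv_fderiv hs hg, Iv]
  have h : ∀ y : ES N, ‖rho y * ⟪y, e⟫_ℝ * g (x + s • y)‖ ≤ rho y * (C * ‖e‖) := fun y => by
    by_cases hy : 1 ≤ ‖y‖
    · simp [rho_zero hy]
    · rw [norm_mul, norm_mul, Real.norm_eq_abs, abs_of_nonneg (rho_nonneg hN y), mul_assoc]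
      refine mul_le_mul_of_nonneg_left ?_ (rho_nonneg hN y)
      have h1 : ‖⟪y, e⟫_ℝ‖ ≤ ‖e‖ := (norm_inner_le_norm y e).trans
        (mul_le_of_le_one_left (norm_nonneg _) (not_le.1 hy).le)
      rw [mul_comm]
      exact mul_le_mul (hC _) h1 (norm_nonneg _) hC0
  refine (norm_integral_le_of_norm_le (rho_int.mul_const _) (ae_of_all _ h)).trans ?_
  rw [integral_mul_const, rho_integral hN, one_mul]

lemma sKv_fderiv_aesm {t : ℝ} {g : ES N → ℝ} (hg : BM g) (x : ES N) :
    AEStronglyMeasurable (fun s => fderiv ℝ (fun x => s * Kv s g x) x)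
      (volume.restrict (Ioc 0 t)) := by
  have h2 : AEStronglyMeasurable (fun s => ∑ i : Fin N,
      Iv (fun y => rho y * ⟪y, EuclideanSpace.single i (1:ℝ)⟫_ℝ) s g x • (EuclideanSpace.proj i : ES N →L[ℝ] ℝ))
      (volume.restrict (Ioc 0 t)) := by
    refine Finset.aestronglyMeasurable_fun_sum _ fun i _ => ?_
    refine AEStronglyMeasurable.smul_const ?_ _
    have hk : Continuous (fun y : ES N => rho y * ⟪y, EuclideanSpace.single i (1:ℝ)⟫_ℝ) := by
      have := rho_cont (N := N)
      fun_prop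
    exact (Iv_sm hk hg.1 x).aestronglyMeasurable
  refine h2.congr ?_
  refine (ae_restrict_iff' measurableSet_Ioc).2 (ae_of_all _ fun s hs => ?_)
  have hL : ∀ L : ES N →L[ℝ] ℝ, L = ∑ i : Fin N, L (EuclideanSpace.single i (1:ℝ)) •
      (EuclideanSpace.proj i : ES N →L[ℝ] ℝ) := by
    intro L
    ext v
    have := congrArg L ((EuclideanSpace.basisFun (Fin N) ℝ).sum_repr v)
    simp only [EuclideanSpace.basisFun_repr, EuclideanSpace.basisFun_apply, map_sum, map_smul] at this
    rw [← this]
    simp [mul_comm]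
  show _ = fderiv ℝ (fun x => s * Kv s g x) x
  rw [hL (fderiv ℝ (fun x => s * Kv s g x) x)]
  refine Finset.sum_congr rfl fun i _ => ?_
  rw [sKv_fderiv hs.1 hg]

lemma Pv_hasFDerivAt (hN : 1 ≤ N) {g : ES N → ℝ} (hg : BM g) {t : ℝ} (ht : 0 < t) (x : ES N) :
    HasFDerivAt (Pv t g) (∫ s in (0:ℝ)..t, fderiv ℝ (fun x => s * Kv s g x) x) x := by
  obtain ⟨C, hC⟩ := hg.2
  have hC0 : 0 ≤ C := (abs_nonneg _).trans (hC x)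
  refine (intervalIntegral.hasFDerivAt_integral_of_dominated_of_fderiv_le (𝕜 := ℝ)
    (F := fun x s => s * Kv s g x) (F' := fun x s => fderiv ℝ (fun x => s * Kv s g x) x)
    (bound := fun _ => C) (s := univ) univ_mem ?_ ?_ ?_ ?_ ?_ ?_)
  · exact Eventually.of_forall fun x => (Kv_intervalIntegrable hN hg x 0 t).aestronglyMeasurable_restrict_uIoc
  · exact Kv_intervalIntegrable hN hg x 0 t
  · rw [uIoc_of_le ht.le]
    exact sKv_fderiv_aesm hg x
  · refine ae_of_all _ fun s hs z _ => ?_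
    rw [uIoc_of_le ht.le] at hs
    exact sKv_fderiv_bound hN hs.1 hg hC0 hC z
  · exact intervalIntegrable_const
  · refine ae_of_all _ fun s hs z _ => ?_
    rw [uIoc_of_le ht.le] at hs
    have := ((Iv_contDiff kap_contDiff (fun _ => kap_zero) hs.1 hg).differentiable (by simp) z).const_mul s
    exact this.hasFDerivAt

lemma Pv_contDiff_one (hN : 1 ≤ N) {g : ES N → ℝ} (hg : BM g) {t : ℝ} (ht : 0 < t) :
    ContDiff ℝ 1 (Pv t g) := by
  obtain ⟨C, hC⟩ := hg.2
  have hC0 : 0 ≤ C := (abs_nonneg _).trans (hC 0)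
  rw [contDiff_one_iff_hasFDerivAt]
  refine ⟨_, ?_, fun x => Pv_hasFDerivAt hN hg ht x⟩
  refine intervalIntegral.continuous_of_dominated_interval (bound := fun _ => C) ?_ ?_ ?_ ?_
  · intro x
    rw [uIoc_of_le ht.le]
    exact sKv_fderiv_aesm hg x
  · intro x
    refine ae_of_all _ fun s hs => ?_
    rw [uIoc_of_le ht.le] at hs
    exact sKv_fderiv_bound hN hs.1 hg hC0 hC x
  · exact intervalIntegrable_const
  · refine ae_of_all _ fun s hs => ?_
    rw [uIoc_of_le ht.le] at hs
    have := (contDiff_const (c := s)).mul (Iv_contDiff kap_contDiff (fun _ => kap_zero) hs.1 hg)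
    exact this.continuous_fderiv (by simp)

lemma BM.of_cs {h : ES N → ℝ} (hc : Continuous h) (hs : HasCompactSupport h) : BM h := by
  refine ⟨hc.measurable, ?_⟩
  obtain ⟨C, hC⟩ := hs.exists_bound_of_continuous hc
  exact ⟨C, fun x => by simpa using hC x⟩

lemma fderiv_dir_cont {h : ES N → ℝ} (hh : ContDiff ℝ 1 h) (e : ES N) :
    Continuous (fun z => fderiv ℝ h z e) :=
  (hh.continuous_fderiv (by simp)).clm_apply continuous_const

lemma Pv_fderiv (hN : 1 ≤ N) {h : ES N → ℝ} (hh : ContDiff ℝ 1 h) (hs : HasCompactSupport h)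
    {t : ℝ} (ht : 0 < t) (x e : ES N) :
    fderiv ℝ (Pv t h) x e = Pv t (fun z => fderiv ℝ h z e) x := by
  have hg : BM h := BM.of_cs hh.continuous hs
  obtain ⟨C, hC⟩ := hg.2
  have hC0 : 0 ≤ C := (abs_nonneg _).trans (hC x)
  have hi : IntervalIntegrable (fun s => fderiv ℝ (fun x => s * Kv s h x) x) volume 0 t := by
    refine (intervalIntegrable_const (c := C)).mono_fun ?_ ?_
    · rw [uIoc_of_le ht.le]
      exact sKv_fderiv_aesm hg x
    · rw [uIoc_of_le ht.le]
      refine (ae_restrict_iff' measurableSet_Ioc).2 (ae_of_all _ fun s hs => ?_)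
      exact (sKv_fderiv_bound hN hs.1 hg hC0 hC x).trans (le_abs_self C)
  rw [(Pv_hasFDerivAt hN hg ht x).fderiv, ContinuousLinearMap.intervalIntegral_apply hi, Pv]
  refine intervalIntegral.integral_congr_ae (ae_of_all _ fun s hs => ?_)
  rw [uIoc_of_le ht.le] at hs
  have hd : DifferentiableAt ℝ (Kv s h) x :=
    (Iv_contDiff kap_contDiff (fun _ => kap_zero) hs.1 hg).differentiable (by simp) x
  rw [fderiv_const_mul hd, smul_apply, Iv_fderiv' kap_cont hs.1 hh ‹_›]
  rfl

lemma Pv_contDiff_two (hN : 1 ≤ N) {h : ES N → ℝ} (hh : ContDiff ℝ 1 h) (hs : HasCompactSupport h)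
    {t : ℝ} (ht : 0 < t) : ContDiff ℝ 2 (Pv t h) := by
  have h1 := Pv_contDiff_one hN (BM.of_cs hh.continuous hs) ht
  rw [show (2 : WithTop ℕ∞) = 1 + 1 by norm_num, contDiff_succ_iff_fderiv_apply]
  refine ⟨h1.differentiable (by simp), by simp, fun e => ?_⟩
  have : (fun x => fderiv ℝ (Pv t h) x e) = Pv t (fun z => fderiv ℝ h z e) := by
    ext x; exact Pv_fderiv hN hh hs ht x e
  rw [this]
  exact Pv_contDiff_one hN (BM.of_cs (fderiv_dir_cont hh e) (fderiv_dir_cs hs e)) ht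


/-! ### Weak compactness -/

lemma weak_compact {Ω : Set (ES N)} (hΩm : MeasurableSet Ω) (hΩf : volume Ω < ⊤)
    {w : ℕ → ES N → ℝ} {R : ℝ} (hR : 0 ≤ R) (hm : ∀ n, Measurable (w n)) (h0 : ∀ n x, 0 ≤ w n x)
    (hwR : ∀ n x, w n x ≤ R) (hz : ∀ n, ∀ x ∉ Ω, w n x = 0) :
    ∃ (F : Filter ℕ) (w0 : ES N → ℝ), F.NeBot ∧ F ≤ atTop ∧ Measurable w0 ∧ (∀ x, 0 ≤ w0 x) ∧
      (∀ x, w0 x ≤ R) ∧ (∀ x ∉ Ω, w0 x = 0) ∧ ∀ φ : ES N → ℝ, BM φ →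
        Tendsto (fun n => ∫ x, w n x * φ x) F (𝓝 (∫ x, w0 x * φ x)) := by
  set μ : Measure (ES N) := volume.restrict Ω with hμ
  have : IsFiniteMeasure μ := ⟨by rw [hμ, Measure.restrict_apply_univ]; exact hΩf⟩
  have hbm : ∀ φ : ES N → ℝ, BM φ → MemLp φ 2 μ := fun φ ⟨h1, C, hC⟩ =>
    MemLp.of_bound h1.aestronglyMeasurable C (ae_of_all _ hC)
  have hwb : ∀ n, BM (w n) := fun n => ⟨hm n, R, fun x => by rw [abs_of_nonneg (h0 n x)]; exact hwR n x⟩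
  let f : ℕ → Lp ℝ 2 μ := fun n => (hbm _ (hwb n)).toLp
  have hf : ∀ n, ‖f n‖ ≤ (μ.real univ) ^ ((2 : ℝ≥0∞).toReal⁻¹) * R := fun n => by
    refine Lp.norm_le_of_ae_bound hR ?_
    filter_upwards [(hbm _ (hwb n)).coeFn_toLp] with x hx
    show ‖(MemLp.toLp (w n) (hbm _ (hwb n)) : ES N → ℝ) x‖ ≤ R
    rw [hx, Real.norm_eq_abs, abs_of_nonneg (h0 n x)]; exact hwR n x
  set B := (μ.real univ) ^ ((2 : ℝ≥0∞).toReal⁻¹) * R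
  have hcomp := WeakDual.isCompact_closedBall (𝕜 := ℝ) (E := Lp ℝ 2 μ) 0 B
  let ψ : ℕ → WeakDual ℝ (Lp ℝ 2 μ) := fun n =>
    WeakDual.toStrongDual.symm (InnerProductSpace.toDual ℝ (Lp ℝ 2 μ) (f n))
  let F : Ultrafilter ℕ := hyperfilter ℕ
  obtain ⟨L, -, hL⟩ := isCompact_iff_ultrafilter_le_nhds'.1 hcomp (F.map ψ) (by
    refine Ultrafilter.mem_map.2 (univ_mem' fun n => ?_)
    show WeakDual.toStrongDual (ψ n) ∈ Metric.closedBall 0 B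
    simp only [ψ, LinearEquiv.apply_symm_apply, mem_closedBall_zero_iff, LinearIsometryEquiv.norm_map]
    exact hf n)
  let v : Lp ℝ 2 μ := (InnerProductSpace.toDual ℝ (Lp ℝ 2 μ)).symm (WeakDual.toStrongDual L)
  have hv : ∀ g : Lp ℝ 2 μ, Tendsto (fun n => ⟪f n, g⟫_ℝ) F (𝓝 ⟪v, g⟫_ℝ) := fun g => by
    have h1 : Tendsto ψ F (𝓝 L) := hL
    have h2 := (WeakDual.eval_continuous (𝕜 := ℝ) g).tendsto L |>.comp h1
    have h3 : ⟪v, g⟫_ℝ = L g := by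
      rw [← InnerProductSpace.toDual_apply_apply (𝕜 := ℝ)]
      simp only [v, LinearIsometryEquiv.apply_symm_apply]
      rfl
    rw [h3]
    exact h2
  have hinn : ∀ φ : ES N → ℝ, BM φ → Tendsto (fun n => ∫ x in Ω, w n x * φ x) F
      (𝓝 (∫ x in Ω, v x * φ x)) := fun φ hφ => by
    have h1 := hv (hbm φ hφ).toLp
    have h2 : ∀ n, ⟪f n, (hbm φ hφ).toLp⟫_ℝ = ∫ x in Ω, w n x * φ x := fun n => by
      rw [L2.inner_def]
      refine integral_congr_ae ?_
      filter_upwards [(hbm _ (hwb n)).coeFn_toLp, (hbm φ hφ).coeFn_toLp] with x hx hx2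
      show ⟪(MemLp.toLp (w n) (hbm _ (hwb n)) : ES N → ℝ) x, _⟫_ℝ = _
      rw [hx, hx2]
      simp [mul_comm]
    have h3 : ⟪v, (hbm φ hφ).toLp⟫_ℝ = ∫ x in Ω, v x * φ x := by
      rw [L2.inner_def]
      refine integral_congr_ae ?_
      filter_upwards [(hbm φ hφ).coeFn_toLp] with x hx2
      rw [hx2]
      simp [mul_comm]
    simpa only [h2, h3] using h1
  have hvm : MemLp v 2 μ := Lp.memLp v
  have hvi : Integrable v μ := hvm.integrable (by norm_num)
  have hwi : ∀ n, Integrable (w n) μ := fun n => (hbm _ (hwb n)).integrable (by norm_num)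
  have hset : ∀ s, MeasurableSet s → Tendsto (fun n => ∫ x in s, w n x ∂μ) F (𝓝 (∫ x in s, v x ∂μ)) := by
    intro s hs
    have h1 := hinn (s.indicator fun _ => 1) ⟨measurable_const.indicator hs, 1, fun x => by
      by_cases hx : x ∈ s <;> simp [hx]⟩
    have h2 : ∀ g : ES N → ℝ, ∫ x in Ω, g x * s.indicator (fun _ => 1) x = ∫ x in s, g x ∂μ := by
      intro g
      rw [← integral_indicator hs]
      congr 1; ext x
      by_cases hx : x ∈ s <;> simp [hx]
    simpa only [h2] using h1
  have hv0 : ∀ᵐ x ∂μ, 0 ≤ v x := by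
    refine ae_nonneg_of_forall_setIntegral_nonneg hvi fun s hs _ => ?_
    exact ge_of_tendsto (hset s hs) (Eventually.of_forall fun n => integral_nonneg fun x => h0 n x)
  have hvR : ∀ᵐ x ∂μ, v x ≤ R := by
    refine ae_le_of_forall_setIntegral_le hvi (integrable_const R) fun s hs _ => ?_
    exact le_of_tendsto (hset s hs) (Eventually.of_forall fun n =>
      integral_mono (hwi n).integrableOn (integrable_const R).integrableOn fun x => hwR n x)
  refine ⟨F, Ω.indicator fun x => max 0 (min R (v x)), F.neBot, ?_, ?_, ?_, ?_, ?_, ?_⟩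
  · exact Nat.hyperfilter_le_atTop
  · refine Measurable.indicator ?_ hΩm
    exact measurable_const.max (measurable_const.min (Lp.stronglyMeasurable v).measurable)
  · intro x
    by_cases hx : x ∈ Ω <;> simp [hx]
  · intro x
    by_cases hx : x ∈ Ω <;> simp [hx, hR]
  · intro x hx
    simp [hx]
  · intro φ hφ
    have h1 := hinn φ hφ
    have h2 : ∀ n, ∫ x in Ω, w n x * φ x = ∫ x, w n x * φ x := fun n => by
      refine setIntegral_eq_integral_of_forall_compl_eq_zero fun x hx => by simp [hz n x hx]
    have h3 : ∫ x in Ω, v x * φ x = ∫ x, (Ω.indicator fun x => max 0 (min R (v x))) x * φ x := by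
      rw [← setIntegral_eq_integral_of_forall_compl_eq_zero (s := Ω)
        (f := fun x => (Ω.indicator fun x => max 0 (min R (v x))) x * φ x) fun x hx => by simp [hx]]
      refine integral_congr_ae ?_
      have hmem : ∀ᵐ x ∂μ, x ∈ Ω := ae_restrict_mem hΩm
      filter_upwards [hv0, hvR, hmem] with x hx hx2 hx3
      simp [hx3, hx, hx2]
    simpa only [h2, h3] using h1

/-! ### Dominated convergence for averages -/

lemma Iv_dct {ι : Type*} {l : Filter ι} [l.IsCountablyGenerated] {k : ES N → ℝ} (hk : Ker k)
    {w : ι → ES N → ℝ} {w0 : ES N → ℝ} {C : ℝ} (hm : ∀ i, Measurable (w i))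
    (hC : ∀ i x, |w i x| ≤ C) {t : ℝ} (ht : 0 ≤ t) {x : ES N}
    (h : ∀ z ∈ Metric.closedBall x t, Tendsto (fun i => w i z) l (𝓝 (w0 z))) :
    Tendsto (fun i => Iv k t (w i) x) l (𝓝 (Iv k t w0 x)) := by
  unfold Iv
  refine tendsto_integral_filter_of_dominated_convergence (fun y => k y * C) ?_ ?_ ?_ ?_
  · refine Eventually.of_forall fun i => ?_
    exact (Iv_integrable hk ⟨hm i, C, hC i⟩ t x).aestronglyMeasurable
  · refine Eventually.of_forall fun i => ae_of_all _ fun y => ?_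
    rw [norm_mul, Real.norm_eq_abs, abs_of_nonneg (hk.nn y)]
    exact mul_le_mul_of_nonneg_left (hC i _) (hk.nn y)
  · exact hk.int.mul_const C
  · refine ae_of_all _ fun y => ?_
    by_cases hy : 1 ≤ ‖y‖
    · simp [hk.zero y hy, tendsto_const_nhds]
    · exact (h _ (mem_ball_of ht (not_le.1 hy).le)).const_mul _

lemma Pv_dct (hN : 1 ≤ N) {ι : Type*} {l : Filter ι} [l.IsCountablyGenerated]
    {w : ι → ES N → ℝ} {w0 : ES N → ℝ} {C : ℝ} (hm : ∀ i, Measurable (w i))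
    (hC : ∀ i x, |w i x| ≤ C) {t : ℝ} (ht : 0 ≤ t) {x : ES N}
    (h : ∀ z ∈ Metric.closedBall x t, Tendsto (fun i => w i z) l (𝓝 (w0 z))) :
    Tendsto (fun i => Pv t (w i) x) l (𝓝 (Pv t w0 x)) := by
  unfold Pv
  refine intervalIntegral.tendsto_integral_filter_of_dominated_convergence
    (fun s => |s| * ((∫ y : ES N, kap y) * C)) ?_ ?_ ?_ ?_
  · exact Eventually.of_forall fun i =>
      (Kv_intervalIntegrable hN ⟨hm i, C, hC i⟩ x 0 t).aestronglyMeasurable_restrict_uIoc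
  · refine Eventually.of_forall fun i => ae_of_all _ fun s _ => ?_
    rw [norm_mul, Real.norm_eq_abs, Real.norm_eq_abs]
    exact mul_le_mul_of_nonneg_left (Iv_abs_le (ker_kap hN) (hC i) s x) (abs_nonneg s)
  · exact Continuous.intervalIntegrable (by fun_prop) _ _
  · refine ae_of_all _ fun s hs => ?_
    rw [uIoc_of_le ht] at hs
    refine (Iv_dct (ker_kap hN) hm hC hs.1.le fun z hz => h z ?_).const_mul s
    exact Metric.closedBall_subset_closedBall hs.2 hz


/-! ### Discrete walk -/

def Dt (Ω : Set (ES N)) (t : ℝ) : Set (ES N) := {x | ENNReal.ofReal t < Metric.infEDist x Ωᶜ}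

lemma Dt_open (Ω : Set (ES N)) (t : ℝ) : IsOpen (Dt Ω t) :=
  isOpen_lt continuous_const Metric.continuous_infEDist

lemma Dt_ball {Ω : Set (ES N)} {t : ℝ} {x : ES N} (hx : x ∈ Dt Ω t) :
    Metric.closedBall x t ⊆ Ω := by
  intro z hz
  by_contra h
  have h1 : Metric.infEDist x Ωᶜ ≤ edist x z := Metric.infEDist_le_edist_of_mem h
  have h2 : edist x z ≤ ENNReal.ofReal t := by
    rw [edist_dist]
    exact ENNReal.ofReal_le_ofReal (by rw [dist_comm]; exact hz)
  exact absurd (h1.trans h2) (not_le.2 hx)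

lemma Dt_compact {Ω : Set (ES N)} (hΩ : IsOpen Ω) {K : Set (ES N)} (hK : IsCompact K) (h : K ⊆ Ω) :
    ∃ δ : ℝ, 0 < δ ∧ ∀ t, 0 ≤ t → t < δ → K ⊆ Dt Ω t := by
  obtain ⟨δ, hδ, hc⟩ := hK.exists_cthickening_subset_open hΩ h
  refine ⟨δ, hδ, fun t ht0 ht x hx => ?_⟩
  have h1 : ENNReal.ofReal δ ≤ Metric.infEDist x Ωᶜ := by
    refine Metric.le_infEDist.2 fun z hz => ?_
    by_contra hlt
    refine hz (hc (Metric.mem_cthickening_of_edist_le z x δ K hx ?_))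
    rw [edist_comm]
    exact (not_le.1 hlt).le
  exact lt_of_lt_of_le ((ENNReal.ofReal_lt_ofReal_iff hδ).2 ht) h1

def wstep (Ω : Set (ES N)) (t : ℝ) (g v : ES N → ℝ) : ES N → ℝ :=
  (Dt Ω t).indicator fun x => Av t v x + kb N * t ^ 2 * g x

lemma walk_exists (hN : 1 ≤ N) {Ω : Set (ES N)} {g ξ0 : ES N → ℝ} {C t : ℝ}
    (hg : Measurable g) (hg0 : ∀ x, 0 ≤ g x) (hgC : ∀ x, g x ≤ C) (hξ : BM ξ0)
    (hξ0 : ∀ x, 0 ≤ ξ0 x) (hmv : MvSol Ω ξ0 (fun _ => 1)) (ht : 0 < t) :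
    ∃ w : ES N → ℝ, Measurable w ∧ (∀ x, 0 ≤ w x) ∧ (∀ x, w x ≤ C * ξ0 x) ∧
      ∀ x ∈ Dt Ω t, w x = Av t w x + kb N * t ^ 2 * g x := by
  have hC0 : 0 ≤ C := (hg0 0).trans (hgC 0)
  have hkb := kb_pos hN
  obtain ⟨X, hX⟩ := hξ.2
  have hX0 : 0 ≤ X := (abs_nonneg _).trans (hX 0)
  have hbm : ∀ v : ES N → ℝ, Measurable v → (∀ x, 0 ≤ v x) → (∀ x, v x ≤ C * ξ0 x) →
      ∀ x, |v x| ≤ C * X := fun v h1 h2 h3 x => by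
    rw [abs_of_nonneg (h2 x)]
    exact (h3 x).trans (mul_le_mul_of_nonneg_left ((le_abs_self _).trans (hX x)) hC0)
  let v : ℕ → ES N → ℝ := fun n => (wstep Ω t g)^[n] 0
  have hvs : ∀ n, v (n + 1) = wstep Ω t g (v n) := fun n => Function.iterate_succ_apply' _ _ _
  have hinv : ∀ n, Measurable (v n) ∧ (∀ x, 0 ≤ v n x) ∧ (∀ x, v n x ≤ C * ξ0 x) := by
    intro n
    induction n with
    | zero => exact ⟨measurable_const, fun x => le_rfl, fun x => mul_nonneg hC0 (hξ0 x)⟩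
    | succ n ih =>
      obtain ⟨h1, h2, h3⟩ := ih
      have hb : BM (v n) := ⟨h1, C * X, hbm _ h1 h2 h3⟩
      rw [hvs]
      refine ⟨?_, ?_, ?_⟩
      · exact ((Iv_BM (ker_rho hN) hb t).1.add (hg.const_mul _)).indicator (Dt_open Ω t).measurableSet
      · intro x
        refine indicator_nonneg (fun x _ => ?_) x
        have := Iv_mono (ker_rho hN) (BM.const 0) hb ht.le (x := x) fun z _ => h2 z
        have h0 := Av_const hN 0 t x
        have := hg0 x
        have : 0 ≤ kb N * t ^ 2 * g x := by positivity
        linarith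
      · intro x
        by_cases hx : x ∈ Dt Ω t
        · simp only [wstep, indicator_of_mem hx]
          have hball := Dt_ball hx
          have h4 := Iv_mono (ker_rho hN) hb (hξ.const_mul C) ht.le (x := x) fun z _ => h3 z
          rw [Iv_const_mul] at h4
          have h5 := hmv x (hball (Metric.mem_closedBall_self ht.le)) t ht hball
          rw [Pv_const] at h5
          have h6 : kb N * t ^ 2 * g x ≤ kb N * t ^ 2 * C :=
            mul_le_mul_of_nonneg_left (hgC x) (by positivity)
          rw [h5]
          linarith
        · simp only [wstep, indicator_of_notMem hx]
          exact mul_nonneg hC0 (hξ0 x)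
  have hb : ∀ n, BM (v n) := fun n => ⟨(hinv n).1, C * X, hbm _ (hinv n).1 (hinv n).2.1 (hinv n).2.2⟩
  have hmono : ∀ n x, v n x ≤ v (n + 1) x := by
    intro n
    induction n with
    | zero => exact fun x => (hinv 1).2.1 x
    | succ n ih =>
      intro x
      rw [hvs, hvs]
      refine indicator_le_indicator ?_
      have := Iv_mono (ker_rho hN) (hb n) (hb (n + 1)) ht.le (x := x) fun z _ => ih z
      linarith
  have hm : ∀ x, Monotone fun n => v n x := fun x => monotone_nat_of_le_succ fun n => hmono n x
  have hlim : ∀ x, Tendsto (fun n => v n x) atTop (𝓝 (⨆ n, v n x)) := fun x =>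
    tendsto_atTop_ciSup (hm x) ⟨C * ξ0 x, by rintro _ ⟨n, rfl⟩; exact (hinv n).2.2 x⟩
  refine ⟨fun x => ⨆ n, v n x, ?_, ?_, ?_, ?_⟩
  · exact measurable_of_tendsto_metrizable (fun n => (hinv n).1) (tendsto_pi_nhds.2 hlim)
  · exact fun x => ge_of_tendsto (hlim x) (Eventually.of_forall fun n => (hinv n).2.1 x)
  · exact fun x => le_of_tendsto (hlim x) (Eventually.of_forall fun n => (hinv n).2.2 x)
  · intro x hx
    have h1 : Tendsto (fun n => v (n + 1) x) atTop (𝓝 (⨆ n, v n x)) :=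
      (hlim x).comp (tendsto_add_atTop_nat 1)
    have h2 : Tendsto (fun n => v (n + 1) x) atTop
        (𝓝 (Av t (fun x => ⨆ n, v n x) x + kb N * t ^ 2 * g x)) := by
      simp only [hvs, wstep, indicator_of_mem hx]
      refine Tendsto.add_const _ ?_
      exact Iv_dct (ker_rho hN) (fun n => (hinv n).1)
        (fun n => hbm _ (hinv n).1 (hinv n).2.1 (hinv n).2.2) ht.le fun z _ => hlim z
    exact tendsto_nhds_unique h1 h2

lemma smooth_cs_mv (hN : 1 ≤ N) {φ : ES N → ℝ} (hφ : ContDiff ℝ ∞ φ) (hs : HasCompactSupport φ)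
    {t : ℝ} (ht : 0 < t) (x : ES N) : Av t φ x = φ x + Pv t (lapl φ) x := by
  have h1 : BM φ := BM.of_cs hφ.continuous hs
  have h2 : BM (lapl φ) := BM.of_cs (lapl_cont hφ) (lapl_cs hs)
  have h3 : BM (fun x => (-1) * lapl φ x) := h2.const_mul (-1)
  have h := mv_of_C2 hN isOpen_univ h1 h3 ((contDiff_infty.1 hφ 2).contDiffOn)
    (fun x _ => by ring) x (mem_univ x) t ht (subset_univ _)
  rw [Pv_const_mul] at h
  linarith

lemma walk_weak (hN : 1 ≤ N) {Ω : Set (ES N)} (hΩ : IsOpen Ω) (hΩf : volume Ω < ⊤)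
    {g : ES N → ℝ} (hg : BM g) {R : ℝ} {w : ES N → ℝ} (hw : Measurable w) (hw0 : ∀ x, 0 ≤ w x)
    (hwR : ∀ x, w x ≤ R) (hz : ∀ x ∉ Ω, w x = 0)
    {t : ℝ} (ht : 0 < t) (hwt : ∀ x ∈ Dt Ω t, w x = Av t w x + kb N * t ^ 2 * g x)
    {φ : ES N → ℝ} (hφ : ContDiff ℝ ∞ φ) (hs : HasCompactSupport φ) (hsub : tsupport φ ⊆ Dt Ω t)
    {ε : ℝ} (hε : ∀ x, ∀ z ∈ Metric.closedBall x t, |lapl φ z - lapl φ x| ≤ ε) :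
    |(∫ x, w x * lapl φ x) + ∫ x, g x * φ x| ≤ ε * (R * (volume Ω).toReal) := by
  have hwb : BM w := ⟨hw, R, fun x => by rw [abs_of_nonneg (hw0 x)]; exact hwR x⟩
  have hkb := kb_pos hN
  have hφi : Integrable φ := hφ.continuous.integrable_of_hasCompactSupport hs
  have hLc := lapl_cont hφ
  have hLs := lapl_cs hs
  have hLb : BM (lapl φ) := BM.of_cs hLc hLs
  have hLi : Integrable (lapl φ) := hLc.integrable_of_hasCompactSupport hLs
  have hmulint : ∀ v ψ : ES N → ℝ, BM v → Integrable ψ → Integrable (fun x => v x * ψ x) := by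
    rintro v ψ ⟨h1, C, hC⟩ hψ
    exact hψ.bdd_mul (c := C) h1.aestronglyMeasurable (ae_of_all _ hC)
  have hAb : BM (Av t w) := Iv_BM (ker_rho hN) hwb t
  have e1 : ∫ x, w x * φ x = (∫ x, Av t w x * φ x) + kb N * t ^ 2 * ∫ x, g x * φ x := by
    rw [← integral_const_mul, ← integral_add (hmulint _ _ hAb hφi)
      ((hmulint _ _ hg hφi).const_mul _)]
    congr 1; ext x
    by_cases hx : x ∈ tsupport φ
    · rw [hwt x (hsub hx)]; ring
    · simp [image_eq_zero_of_notMem_tsupport hx]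
  rw [Iv_symm (ker_rho hN) rho_neg hwb hφ.continuous hs] at e1
  have e2 : ∀ x, Iv rho t φ x = φ x + Pv t (lapl φ) x := fun x => smooth_cs_mv hN hφ hs ht x
  have hPeq : Pv t (lapl φ) = fun x => Av t φ x - φ x := by
    ext x; have := e2 x; simp only [Av]; linarith
  have hwint : Integrable w := by
    have h1 : IntegrableOn w Ω := by
      refine Measure.integrableOn_of_bounded (M := R) hΩf.ne hw.aestronglyMeasurable ?_
      exact ae_of_all _ fun x => by rw [Real.norm_eq_abs, abs_of_nonneg (hw0 x)]; exact hwR x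
    exact h1.integrable_of_forall_notMem_eq_zero hz
  have hPb : BM (Pv t (lapl φ)) := by
    rw [hPeq]
    have := (Iv_BM (ker_rho hN) (BM.of_cs hφ.continuous hs) t).add
      ((BM.of_cs hφ.continuous hs).const_mul (-1))
    convert this using 2; ring
  have hwP : Integrable (fun x => w x * Pv t (lapl φ) x) := by
    obtain ⟨h1, C, hC⟩ := hPb
    exact hwint.mul_bdd (c := C) h1.aestronglyMeasurable (ae_of_all _ hC)
  have hwφ := hmulint _ _ hwb hφi
  have e3 : ∫ x, w x * Iv rho t φ x = (∫ x, w x * φ x) + ∫ x, w x * Pv t (lapl φ) x := by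
    rw [← integral_add hwφ hwP]
    congr 1; ext x; rw [e2]; ring
  have e4 : kb N * t ^ 2 * ((∫ x, w x * lapl φ x) + ∫ x, g x * φ x)
      = ∫ x, w x * (kb N * lapl φ x * t ^ 2 - Pv t (lapl φ) x) := by
    have : ∀ x, w x * (kb N * lapl φ x * t ^ 2 - Pv t (lapl φ) x) =
        kb N * t ^ 2 * (w x * lapl φ x) - w x * Pv t (lapl φ) x := fun x => by ring
    simp only [this]
    rw [integral_sub ((hmulint _ _ hwb hLi).const_mul _) hwP, integral_const_mul]
    linarith
  have hε0 : 0 ≤ ε := (abs_nonneg _).trans (hε 0 0 (Metric.mem_closedBall_self ht.le))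
  have e5 : |∫ x, w x * (kb N * lapl φ x * t ^ 2 - Pv t (lapl φ) x)|
      ≤ ∫ x, w x * (kb N * ε * t ^ 2) := by
    rw [← Real.norm_eq_abs]
    refine norm_integral_le_of_norm_le (hwint.mul_const _) (ae_of_all _ fun x => ?_)
    rw [norm_mul, Real.norm_eq_abs, abs_of_nonneg (hw0 x)]
    refine mul_le_mul_of_nonneg_left ?_ (hw0 x)
    rw [Real.norm_eq_abs, abs_sub_comm]
    exact Pv_near hN hLb ht.le (hε x)
  have e6 : ∫ x, w x ≤ R * (volume Ω).toReal := by
    rw [← setIntegral_eq_integral_of_forall_compl_eq_zero (s := Ω) hz]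
    have := setIntegral_mono_on (hwint.integrableOn (s := Ω)) (integrableOn_const hΩf.ne) hΩ.measurableSet
      (fun x _ => hwR x)
    refine this.trans (le_of_eq ?_)
    simp [mul_comm, Measure.real]
  rw [integral_mul_const, ← e4, abs_mul, abs_of_pos (by positivity)] at e5
  have hpos : 0 < kb N * t ^ 2 := by positivity
  have e7 : (∫ x, w x) * (kb N * ε * t ^ 2) ≤ kb N * t ^ 2 * (ε * (R * (volume Ω).toReal)) := by
    have := mul_le_mul_of_nonneg_right e6 (by positivity : 0 ≤ kb N * ε * t ^ 2)
    linarith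
  exact le_of_mul_le_mul_left (e5.trans e7) hpos


/-! ### Linear Poisson problem -/

lemma exists_ball {Ω : Set (ES N)} (hΩ : IsOpen Ω) {x : ES N} (hx : x ∈ Ω) :
    ∃ t : ℝ, 0 < t ∧ Metric.closedBall x t ⊆ Ω := by
  obtain ⟨t, ht, h⟩ := Metric.isOpen_iff.1 hΩ x hx
  exact ⟨t / 2, by linarith, (Metric.closedBall_subset_ball (by linarith)).trans h⟩

lemma Pv_small (hN : 1 ≤ N) {g : ES N → ℝ} (hg : Measurable g) {C : ℝ} (hC : ∀ x, |g x| ≤ C) {t : ℝ}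
    (ht : 0 ≤ t) (x : ES N) : |Pv t g x| ≤ kb N * C * t ^ 2 := by
  have := Pv_near hN ⟨hg, C, hC⟩ ht (x := x) (a := 0) (ε := C) (fun z _ => by simpa using hC z)
  simpa using this

lemma measurable_indicator_of_contOn {Ω : Set (ES N)} (hΩ : IsOpen Ω) {u : ES N → ℝ}
    (hu : ContinuousOn u Ω) : Measurable (Ω.indicator u) := by
  classical
  have h := hu.measurable_piecewise (g := (0 : ES N → ℝ)) continuous_zero.continuousOn hΩ.measurableSet
  rwa [piecewise_eq_indicator] at h

/-- upgrade a bounded weak solution to a mean value solution -/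
lemma upgrade (hN : 1 ≤ N) {Ω : Set (ES N)} (hΩ : IsOpen Ω) {g w0 : ES N → ℝ} (hg : BM g)
    (hw0 : BM w0) (h : WeakSol Ω w0 g) :
    ∃ w : ES N → ℝ, Measurable w ∧ (∀ x ∉ Ω, w x = 0) ∧ ContinuousOn w Ω ∧
      (∀ x ∈ Ω, ∀ t, 0 < t → Metric.closedBall x t ⊆ Ω → w x = Av t w0 x + Pv t g x) ∧
      ((∃ C, ∀ x, |w x| ≤ C) → MvSol Ω w g) := by
  classical
  let w : ES N → ℝ := fun x => if hx : x ∈ Ω then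
    Av (exists_ball hΩ hx).choose w0 x + Pv (exists_ball hΩ hx).choose g x else 0
  have hw : ∀ x ∈ Ω, ∀ t, 0 < t → Metric.closedBall x t ⊆ Ω → w x = Av t w0 x + Pv t g x := by
    intro x hx t ht hb
    obtain ⟨hs, hbs⟩ := (exists_ball hΩ hx).choose_spec
    simp only [w, dif_pos hx]
    rcases le_total (exists_ball hΩ hx).choose t with hle | hle
    · exact weak_const hN hw0 hg h hs hle hb
    · exact (weak_const hN hw0 hg h ht hle hbs).symm
  have hz : ∀ x ∉ Ω, w x = 0 := fun x hx => by simp only [w, dif_neg hx]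
  have hA : ∀ t, 0 < t → Continuous (Av t w0) := fun t ht =>
    (Iv_contDiff rho_contDiff (fun _ => rho_zero) ht hw0).continuous
  have hc : ContinuousOn w Ω := by
    intro x hx
    refine ContinuousAt.continuousWithinAt ?_
    obtain ⟨t, ht, hb⟩ := exists_ball hΩ hx
    have ht2 : 0 < t / 2 := by linarith
    have h1 : ContinuousAt (fun z => Av (t / 2) w0 z + Pv (t / 2) g z) x :=
      ((hA _ ht2).add (Pv_contDiff_one hN hg ht2).continuous).continuousAt
    refine h1.congr ?_
    filter_upwards [Metric.ball_mem_nhds x ht2] with z hz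
    have hzb : Metric.closedBall z (t / 2) ⊆ Ω := fun y hy => hb (by
      have h3 := dist_triangle y z x
      simp only [Metric.mem_closedBall, Metric.mem_ball] at *
      linarith)
    exact (hw z (hzb (Metric.mem_closedBall_self ht2.le)) _ ht2 hzb).symm
  have hwm : Measurable w := by
    have e : w = Ω.indicator w := by
      ext x
      by_cases hx : x ∈ Ω
      · simp [hx]
      · simp [hx, hz x hx]
    rw [e]
    exact measurable_indicator_of_contOn hΩ hc
  refine ⟨w, hwm, hz, hc, hw, ?_⟩
  rintro ⟨C, hC⟩ x hx t ht hb
  rw [hw x hx t ht hb]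
  congr 1
  have l1 : ∀ z ∈ Ω, Tendsto (fun s => Av s w0 z) (𝓝[>] 0) (𝓝 (w z)) := by
    intro z hz
    have h1 : Tendsto (fun s => w z - Pv s g z) (𝓝[>] 0) (𝓝 (w z - 0)) :=
      tendsto_const_nhds.sub (Pv_tendsto hN hg z)
    rw [sub_zero] at h1
    refine h1.congr' ?_
    obtain ⟨r, hr, hbr⟩ := exists_ball hΩ hz
    filter_upwards [Ioc_mem_nhdsGT hr] with s hs
    rw [hw z hz s hs.1 ((Metric.closedBall_subset_closedBall hs.2).trans hbr)]
    ring
  obtain ⟨B, hB⟩ := hw0.2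
  have l2 : Tendsto (fun s => Av t (Av s w0) x) (𝓝[>] 0) (𝓝 (Av t w x)) := by
    refine Iv_dct (ker_rho hN) (C := (∫ y : ES N, rho y) * B)
      (fun s => (Iv_BM (ker_rho hN) hw0 s).1) (fun s z => Iv_abs_le (ker_rho hN) hB s z) ht.le ?_
    exact fun z hz => l1 z (hb hz)
  have l3 : Tendsto (fun s => Av t (Av s w0) x) (𝓝[>] 0) (𝓝 (Av t w0 x)) := by
    have : (fun s => Av t (Av s w0) x) = fun s => Av s (Av t w0) x := by
      ext s; exact Iv_comm (ker_rho hN) (ker_rho hN) hw0 t s x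
    rw [this]
    exact Av_tendsto hN (Iv_BM (ker_rho hN) hw0 t) (hA t ht).continuousAt
  exact tendsto_nhds_unique l3 l2

lemma poisson_exists (hN : 1 ≤ N) {Ω : Set (ES N)} (hΩ : IsOpen Ω) (hΩf : volume Ω < ⊤)
    {g ξ0 : ES N → ℝ} {C : ℝ}
    (hg : Measurable g) (hg0 : ∀ x, 0 ≤ g x) (hgC : ∀ x, g x ≤ C) (hξ : BM ξ0)
    (hξ0 : ∀ x, 0 ≤ ξ0 x) (hξz : ∀ x ∉ Ω, ξ0 x = 0) (hmv : MvSol Ω ξ0 (fun _ => 1)) :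
    ∃ w : ES N → ℝ, Measurable w ∧ (∀ x, 0 ≤ w x) ∧ (∀ x, w x ≤ C * ξ0 x) ∧
      ContinuousOn w Ω ∧ MvSol Ω w g := by
  have hC0 : 0 ≤ C := (hg0 0).trans (hgC 0)
  have hgb : BM g := ⟨hg, C, fun x => by rw [abs_of_nonneg (hg0 x)]; exact hgC x⟩
  obtain ⟨X, hX⟩ := hξ.2
  have hX0 : 0 ≤ X := (abs_nonneg _).trans (hX 0)
  have hCX : ∀ x, C * ξ0 x ≤ C * X := fun x =>
    mul_le_mul_of_nonneg_left ((le_abs_self _).trans (hX x)) hC0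
  have htn : ∀ n : ℕ, (0:ℝ) < 1 / ((n:ℝ) + 1) := fun n => by positivity
  choose w hwm hw0 hwξ hwt using fun n : ℕ =>
    walk_exists hN (Ω := Ω) hg hg0 hgC hξ hξ0 hmv (htn n)
  have hwz : ∀ n, ∀ x ∉ Ω, w n x = 0 := fun n x hx =>
    le_antisymm (by have := hwξ n x; rwa [hξz x hx, mul_zero] at this) (hw0 n x)
  have hwR : ∀ n x, w n x ≤ C * X := fun n x => (hwξ n x).trans (hCX x)
  have hwb : ∀ n, BM (w n) := fun n => ⟨hwm n, C * X, fun x => by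
    rw [abs_of_nonneg (hw0 n x)]; exact hwR n x⟩
  obtain ⟨F, v, hF, hFa, hvm, hv0, hvR, hvz, hlim⟩ :=
    weak_compact hΩ.measurableSet hΩf (mul_nonneg hC0 hX0) hwm hw0 hwR hwz
  have hvb : BM v := ⟨hvm, C * X, fun x => by rw [abs_of_nonneg (hv0 x)]; exact hvR x⟩
  have htend : Tendsto (fun n : ℕ => 1 / ((n:ℝ) + 1)) F (𝓝 0) :=
    tendsto_one_div_add_atTop_nhds_zero_nat.mono_left hFa
  have hweak : WeakSol Ω v g := by
    intro φ hφ hs hsub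
    have hL : BM (lapl φ) := BM.of_cs (lapl_cont hφ) (lapl_cs hs)
    have h1 := ((hlim _ hL).add_const (∫ x, g x * φ x)).abs
    set V := C * X * (volume Ω).toReal with hV
    have hV0 : 0 ≤ V := by positivity
    have h2 : ∀ ε, 0 < ε → |(∫ x, v x * lapl φ x) + ∫ x, g x * φ x| ≤ ε * V := by
      intro ε hε
      refine le_of_tendsto h1 ?_
      obtain ⟨δ, hδ, hK⟩ := Dt_compact hΩ hs hsub
      obtain ⟨η, hη, hu⟩ := Metric.uniformContinuous_iff.1
        ((lapl_cs hs).uniformContinuous_of_continuous (lapl_cont hφ)) ε hε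
      filter_upwards [htend.eventually_lt_const hδ, htend.eventually_lt_const hη] with n hn1 hn2
      refine walk_weak hN hΩ hΩf hgb (hwm n) (hw0 n) (hwR n) (hwz n) (htn n) (hwt n) hφ hs
        (hK _ (htn n).le hn1) ?_
      intro x z hz
      exact (hu (lt_of_le_of_lt hz hn2)).le
    have h3 : |(∫ x, v x * lapl φ x) + ∫ x, g x * φ x| ≤ 0 := by
      refine le_of_forall_pos_le_add fun ε hε => ?_
      refine (h2 (ε / (V + 1)) (by positivity)).trans ?_
      rw [zero_add, div_mul_eq_mul_div, div_le_iff₀ (by linarith)]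
      nlinarith
    have := abs_nonpos_iff.1 h3
    linarith
  obtain ⟨u, hum, huz, huc, hu, humv⟩ := upgrade hN hΩ hgb hvb hweak
  have hAlim : ∀ t, 0 < t → ∀ x, Tendsto (fun n => Av t (w n) x) F (𝓝 (Av t v x)) := by
    intro t ht x
    have e : ∀ w : ES N → ℝ, Av t w x = (t ^ N)⁻¹ * ∫ z, w z * rho (t⁻¹ • (z - x)) := fun w => by
      rw [Av, Iv_eq _ ht]
      congr 2; ext z; ring
    simp only [e]
    refine (hlim (fun z => rho (t⁻¹ • (z - x))) ?_).const_mul _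
    obtain ⟨B, hB⟩ := (BM.of_cs rho_cont rho_cs : BM (rho : ES N → ℝ)).2
    refine ⟨?_, B, fun z => hB _⟩
    have := rho_cont (N := N)
    exact (by fun_prop : Continuous fun z => rho (t⁻¹ • (z - x))).measurable
  have hu0 : ∀ x, 0 ≤ u x := by
    intro x
    by_cases hx : x ∈ Ω
    · obtain ⟨t, ht, hb⟩ := exists_ball hΩ hx
      rw [hu x hx t ht hb]
      have h1 := Iv_mono (ker_rho hN) (BM.const 0) hvb ht.le (x := x) fun z _ => hv0 z
      have h2 := Pv_mono hN (BM.const 0) hgb ht.le (x := x) fun z _ => hg0 z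
      have h3 := Av_const hN 0 t x
      rw [Pv_const] at h2
      simp only [mul_zero, zero_mul] at h2
      linarith
    · rw [huz x hx]
  have huξ : ∀ x, u x ≤ C * ξ0 x := by
    intro x
    by_cases hx : x ∈ Ω
    · obtain ⟨t, ht, hb⟩ := exists_ball hΩ hx
      rw [hu x hx t ht hb, hmv x hx t ht hb, mul_add]
      refine add_le_add ?_ ?_
      · refine le_of_tendsto (hAlim t ht x) (Eventually.of_forall fun n => ?_)
        rw [← Iv_const_mul]
        exact Iv_mono (ker_rho hN) (hwb n) (hξ.const_mul C) ht.le fun z _ => hwξ n z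
      · rw [← Pv_const_mul]
        exact Pv_mono hN hgb ((BM.const 1).const_mul C) ht.le fun z _ => by simpa using hgC z
    · rw [huz x hx, hξz x hx, mul_zero]
  refine ⟨u, hum, hu0, huξ, huc, humv ⟨C * X, fun x => ?_⟩⟩
  rw [abs_of_nonneg (hu0 x)]
  exact (huξ x).trans (hCX x)


/-! ### Comparison and regularity -/

lemma cs_of_bdd {Ω : Set (ES N)} (hΩb : Bornology.IsBounded Ω) {w : ES N → ℝ}
    (hz : ∀ x ∉ Ω, w x = 0) : HasCompactSupport w :=
  HasCompactSupport.intro hΩb.isCompact_closure fun x hx => hz x fun h => hx (subset_closure h)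

lemma cont_of_dom {Ω : Set (ES N)} (hΩ : IsOpen Ω) {w ξ0 : ES N → ℝ} {C : ℝ} (hξc : Continuous ξ0)
    (hξz : ∀ x ∉ Ω, ξ0 x = 0) (hw0 : ∀ x, 0 ≤ w x) (hwξ : ∀ x, w x ≤ C * ξ0 x)
    (hc : ContinuousOn w Ω) : Continuous w := by
  rw [continuous_iff_continuousAt]
  intro x
  by_cases hx : x ∈ Ω
  · exact hc.continuousAt (hΩ.mem_nhds hx)
  · have hwx : w x = 0 := le_antisymm (by have := hwξ x; rwa [hξz x hx, mul_zero] at this) (hw0 x)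
    have h1 : Tendsto (fun z => C * ξ0 z) (𝓝 x) (𝓝 0) := by
      have := (hξc.tendsto x).const_mul C
      rwa [hξz x hx, mul_zero] at this
    rw [ContinuousAt, hwx]
    exact tendsto_of_tendsto_of_tendsto_of_le_of_le tendsto_const_nhds h1 hw0 hwξ

lemma comparison (hN : 1 ≤ N) {Ω : Set (ES N)} (hΩ : IsOpen Ω) (hΩb : Bornology.IsBounded Ω)
    {ξ0 : ES N → ℝ} (hξc : Continuous ξ0) (hξz : ∀ x ∉ Ω, ξ0 x = 0)
    (hmv : MvSol Ω ξ0 (fun _ => 1)) {w1 w2 g1 g2 : ES N → ℝ}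
    (hc1 : Continuous w1) (hc2 : Continuous w2) (hz1 : ∀ x ∉ Ω, w1 x = 0) (hz2 : ∀ x ∉ Ω, w2 x = 0)
    (hg1 : BM g1) (hg2 : BM g2) (h1 : MvSol Ω w1 g1) (h2 : MvSol Ω w2 g2)
    (hg : ∀ x ∈ Ω, g1 x ≤ g2 x) (x : ES N) : w1 x ≤ w2 x := by
  by_contra hlt
  rw [not_le] at hlt
  have hξb : BM ξ0 := BM.of_cs hξc (cs_of_bdd hΩb hξz)
  have hwb1 : BM w1 := BM.of_cs hc1 (cs_of_bdd hΩb hz1)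
  have hwb2 : BM w2 := BM.of_cs hc2 (cs_of_bdd hΩb hz2)
  obtain ⟨ε, hε, hεx⟩ : ∃ ε : ℝ, 0 < ε ∧ w2 x + -1 * w1 x + ε * ξ0 x < 0 := by
    refine ⟨(w1 x - w2 x) / (|ξ0 x| + 1), div_pos (by linarith) (by positivity), ?_⟩
    have hp : 0 < |ξ0 x| + 1 := by positivity
    have : (w1 x - w2 x) / (|ξ0 x| + 1) * ξ0 x < w1 x - w2 x := by
      rw [div_mul_eq_mul_div, div_lt_iff₀ hp]
      have := le_abs_self (ξ0 x)
      nlinarith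
    linarith
  set v : ES N → ℝ := fun z => w2 z + -1 * w1 z + ε * ξ0 z with hv
  have hvc : Continuous v := by fun_prop
  have hvz : ∀ z ∉ Ω, v z = 0 := fun z hz => by simp [hv, hz1 z hz, hz2 z hz, hξz z hz]
  obtain ⟨x0, hx0⟩ := hvc.exists_forall_le_of_hasCompactSupport (cs_of_bdd hΩb hvz)
  have hneg : v x0 < 0 := (hx0 x).trans_lt hεx
  have hxΩ : x0 ∈ Ω := by
    by_contra h; rw [hvz x0 h] at hneg; exact lt_irrefl _ hneg
  obtain ⟨t, ht, hb⟩ := exists_ball hΩ hxΩ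
  have hvb : BM v := (hwb2.add (hwb1.const_mul (-1))).add (hξb.const_mul ε)
  have e1 : Av t v x0 = Av t w2 x0 + -1 * Av t w1 x0 + ε * Av t ξ0 x0 := by
    simp only [Av, hv]
    rw [Iv_add (ker_rho hN) (hwb2.add (hwb1.const_mul (-1))) (hξb.const_mul ε),
      Iv_add (ker_rho hN) hwb2 (hwb1.const_mul (-1)), Iv_const_mul, Iv_const_mul]
  have e2 := h1 x0 hxΩ t ht hb
  have e3 := h2 x0 hxΩ t ht hb
  have e4 := hmv x0 hxΩ t ht hb
  rw [Pv_const] at e4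
  have e5 : Pv t g1 x0 ≤ Pv t g2 x0 := Pv_mono hN hg1 hg2 ht.le fun z hz => hg z (hb hz)
  have e6 : v x0 ≤ Av t v x0 := by
    have := Iv_mono (ker_rho hN) (BM.const (v x0)) hvb ht.le (x := x0) fun z _ => hx0 z
    rwa [show Iv rho t (fun _ => v x0) x0 = v x0 from Av_const hN _ t x0] at this
  have e7 : v x0 = w2 x0 + -1 * w1 x0 + ε * ξ0 x0 := rfl
  have hkb := kb_pos hN
  have hp : 0 < ε * (kb N * 1 * t ^ 2) := by positivity
  have e8 : ε * ξ0 x0 = ε * Av t ξ0 x0 + ε * (kb N * 1 * t ^ 2) := by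
    rw [← mul_add, ← e4]
  linarith

lemma mv_local {Ω : Set (ES N)} {u g : ES N → ℝ} (h : MvSol Ω u g) {x : ES N} {t : ℝ}
    (ht : 0 < t) (hb : Metric.closedBall x (2 * t) ⊆ Ω) :
    ∀ z ∈ Metric.ball x t, u z = Av t u z + Pv t g z := by
  intro z hz
  have hzb : Metric.closedBall z t ⊆ Ω := fun y hy => hb (by
    have h3 := dist_triangle y z x
    simp only [Metric.mem_closedBall, Metric.mem_ball] at *
    linarith)
  exact h z (hzb (Metric.mem_closedBall_self ht.le)) t ht hzb

lemma exists_ball2 {Ω : Set (ES N)} (hΩ : IsOpen Ω) {x : ES N} (hx : x ∈ Ω) :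
    ∃ t : ℝ, 0 < t ∧ Metric.closedBall x (2 * t) ⊆ Ω := by
  obtain ⟨t, ht, h⟩ := exists_ball hΩ hx
  exact ⟨t / 2, by linarith, by rwa [show 2 * (t / 2) = t by ring]⟩

lemma mv_C1 (hN : 1 ≤ N) {Ω : Set (ES N)} (hΩ : IsOpen Ω) {u g : ES N → ℝ} (hu : BM u) (hg : BM g)
    (h : MvSol Ω u g) : ContDiffOn ℝ 1 u Ω := by
  intro x hx
  refine ContDiffAt.contDiffWithinAt ?_
  obtain ⟨t, ht, hb⟩ := exists_ball2 hΩ hx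
  have h1 : ContDiff ℝ 1 (fun z => Av t u z + Pv t g z) :=
    ((Iv_contDiff rho_contDiff (fun _ => rho_zero) ht hu).of_le (by simp)).add
      (Pv_contDiff_one hN hg ht)
  refine h1.contDiffAt.congr_of_eventuallyEq ?_
  filter_upwards [Metric.ball_mem_nhds x ht] with z hz
  exact mv_local h ht hb z hz

lemma mv_C2 (hN : 1 ≤ N) {Ω : Set (ES N)} (hΩ : IsOpen Ω) {u g : ES N → ℝ} (hu : BM u)
    (h : MvSol Ω u g) (hg1 : ContDiffOn ℝ 1 g Ω) : ContDiffOn ℝ 2 u Ω := by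
  intro x hx
  refine ContDiffAt.contDiffWithinAt ?_
  obtain ⟨r, hr, hb⟩ := exists_ball hΩ hx
  let c : ContDiffBump x := { rIn := r / 2, rOut := r, rIn_pos := by linarith, rIn_lt_rOut := by linarith }
  have hcΩ : tsupport c ⊆ Ω := by rw [c.tsupport_eq]; exact hb
  have hh1 : ContDiff ℝ 1 (fun z => c z * g z) := by
    rw [contDiff_iff_contDiffAt]
    intro z
    by_cases hz : z ∈ tsupport c
    · exact c.contDiff.contDiffAt.mul (hg1.contDiffAt (hΩ.mem_nhds (hcΩ hz)))
    · have : (fun z => c z * g z) =ᶠ[𝓝 z] fun _ => 0 := by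
        filter_upwards [(isClosed_tsupport c).isOpen_compl.mem_nhds hz] with y hy
        rw [image_eq_zero_of_notMem_tsupport hy, zero_mul]
      exact contDiffAt_const.congr_of_eventuallyEq this
  have hhs : HasCompactSupport (fun z => c z * g z) := c.hasCompactSupport.mul_right
  have ht : 0 < r / 4 := by linarith
  have h1 : ContDiff ℝ 2 (fun z => Av (r / 4) u z + Pv (r / 4) (fun z => c z * g z) z) :=
    (contDiff_infty.1 (Iv_contDiff rho_contDiff (fun _ => rho_zero) ht hu) 2).add
      (Pv_contDiff_two hN hh1 hhs ht)
  refine h1.contDiffAt.congr_of_eventuallyEq ?_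
  filter_upwards [Metric.ball_mem_nhds x ht] with z hz
  have h2 := mv_local h ht ((Metric.closedBall_subset_closedBall (by linarith)).trans hb) z hz
  rw [h2]
  congr 1
  refine Pv_congr hN ht.le fun y hy => ?_
  have : c y = 1 := c.one_of_mem_closedBall (by
    have h3 := dist_triangle y z x
    simp only [Metric.mem_closedBall, Metric.mem_ball] at *
    show dist y x ≤ r / 2
    linarith)
  rw [this, one_mul]

lemma lapl_contOn {Ω : Set (ES N)} (hΩ : IsOpen Ω) {u : ES N → ℝ} (hu : ContDiffOn ℝ 2 u Ω) :
    ContinuousOn (lapl u) Ω := by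
  unfold lapl
  refine continuousOn_finsetSum _ fun i _ => ?_
  exact ((fderiv_dir_contDiffOn hΩ hu _).continuousOn_fderiv_of_isOpen hΩ (by norm_num)).clm_apply
    continuousOn_const

lemma mv_lapl (hN : 1 ≤ N) {Ω : Set (ES N)} (hΩ : IsOpen Ω) {u g : ES N → ℝ} (hu : BM u)
    (hg : BM g) (h : MvSol Ω u g) (hgc : ContinuousOn g Ω) (h2 : ContDiffOn ℝ 2 u Ω) :
    ∀ x ∈ Ω, -lapl u x = g x := by
  intro x hx
  obtain ⟨r, hr, hb⟩ := exists_ball hΩ hx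
  have hbb : Metric.ball x r ⊆ Ω := Metric.ball_subset_closedBall.trans hb
  have hlc := lapl_contOn hΩ h2
  set g' : ES N → ℝ := (Metric.ball x r).indicator fun z => -lapl u z with hg'
  have hg'b : BM g' := by
    refine ⟨measurable_indicator_of_contOn Metric.isOpen_ball (hlc.mono hbb).neg, ?_⟩
    obtain ⟨C, hC⟩ := (isCompact_closedBall x r).exists_bound_of_continuousOn (hlc.mono hb)
    have hC0 : 0 ≤ C := (norm_nonneg _).trans (hC x (Metric.mem_closedBall_self hr.le))
    refine ⟨C, fun z => ?_⟩
    by_cases hz : z ∈ Metric.ball x r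
    · simp only [hg', indicator_of_mem hz, abs_neg]
      exact hC z (Metric.ball_subset_closedBall hz)
    · simp only [hg', indicator_of_notMem hz, abs_zero, hC0]
  have hmv' : MvSol (Metric.ball x r) u g' := mv_of_C2 hN Metric.isOpen_ball hu hg'b (h2.mono hbb)
    fun z hz => by simp only [hg', indicator_of_mem hz]
  have hxb : x ∈ Metric.ball x r := Metric.mem_ball_self hr
  have hg'x : g' x = -lapl u x := by simp only [hg', indicator_of_mem hxb]
  have hgc' : ContinuousAt g' x := by
    have h3 : ContinuousAt (fun z => -lapl u z) x := (hlc.continuousAt (hΩ.mem_nhds hx)).neg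
    refine h3.congr ?_
    filter_upwards [Metric.ball_mem_nhds x hr] with z hz
    simp only [hg', indicator_of_mem hz]
  rw [← hg'x]
  have hkb := kb_pos hN
  have key : ∀ ε, 0 < ε → |g' x - g x| ≤ 2 * ε := by
    intro ε hε
    obtain ⟨δ1, hδ1, hd1⟩ := Metric.continuousAt_iff.1 hgc' ε hε
    obtain ⟨δ2, hδ2, hd2⟩ := Metric.continuousAt_iff.1 (hgc.continuousAt (hΩ.mem_nhds hx)) ε hε
    obtain ⟨t, ht, htm⟩ : ∃ t : ℝ, 0 < t ∧ t < min r (min δ1 δ2) :=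
      exists_between (lt_min hr (lt_min hδ1 hδ2))
    obtain ⟨htr, ht12⟩ := lt_min_iff.1 htm
    obtain ⟨ht1, ht2⟩ := lt_min_iff.1 ht12
    have e1 := hmv' x hxb t ht (Metric.closedBall_subset_ball htr)
    have e2 := h x hx t ht ((Metric.closedBall_subset_closedBall htr.le).trans hb)
    have e3 := Pv_near hN hg'b ht.le (x := x) (a := g' x) (ε := ε) fun z hz =>
      (hd1 (lt_of_le_of_lt hz ht1)).le
    have e4 := Pv_near hN hg ht.le (x := x) (a := g x) (ε := ε) fun z hz =>
      (hd2 (lt_of_le_of_lt hz ht2)).le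
    rw [show Pv t g' x = Pv t g x by linarith] at e3
    have hp : 0 < kb N * t ^ 2 := by positivity
    rw [abs_le] at e3 e4 ⊢
    constructor
    · refine le_of_mul_le_mul_left ?_ hp
      linarith [e3.1, e3.2, e4.1, e4.2]
    · refine le_of_mul_le_mul_left ?_ hp
      linarith [e3.1, e3.2, e4.1, e4.2]
  have : |g' x - g x| ≤ 0 := le_of_forall_pos_le_add fun ε hε => by
    have := key (ε / 2) (by linarith)
    linarith
  linarith [abs_nonpos_iff.1 this]


/-! ### The energy identity -/

/-- a continuous cut-off -/
def thn (n : ℕ) (r : ℝ) : ℝ := min 1 (max 0 (n * r - 1))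

/-- primitive of the cut-off -/
def etn (n : ℕ) (s : ℝ) : ℝ := ∫ r in (0 : ℝ)..s, thn n r

lemma thn_cont (n : ℕ) : Continuous (thn n) := by unfold thn; fun_prop

lemma thn_nonneg (n : ℕ) (r : ℝ) : 0 ≤ thn n r := le_min zero_le_one (le_max_left _ _)

lemma thn_le (n : ℕ) (r : ℝ) : thn n r ≤ 1 := min_le_left _ _

lemma thn_mono {r : ℝ} (hr : 0 ≤ r) : Monotone fun n => thn n r := by
  intro m n h
  have : (m : ℝ) ≤ n := by exact_mod_cast h
  simp only [thn]
  gcongr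

lemma thn_tendsto {r : ℝ} (hr : 0 < r) : Tendsto (fun n => thn n r) atTop (𝓝 1) := by
  refine tendsto_const_nhds.congr' ?_
  obtain ⟨k, hk⟩ := exists_nat_ge (2 / r)
  filter_upwards [eventually_ge_atTop k] with n hn
  have h1 : (k : ℝ) ≤ n := by exact_mod_cast hn
  have h2 : 2 ≤ n * r := by rw [← div_le_iff₀ hr]; linarith
  simp only [thn]
  rw [min_eq_left]
  exact le_max_of_le_right (by linarith)

lemma etn_hasDeriv (n : ℕ) (s : ℝ) : HasDerivAt (etn n) (thn n s) s :=
  intervalIntegral.integral_hasDerivAt_right ((thn_cont n).intervalIntegrable _ _)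
    ((thn_cont n).stronglyMeasurableAtFilter _ _) (thn_cont n).continuousAt

lemma etn_contDiff (n : ℕ) : ContDiff ℝ 1 (etn n) := by
  rw [contDiff_one_iff_deriv]
  refine ⟨fun s => (etn_hasDeriv n s).differentiableAt, ?_⟩
  rw [show deriv (etn n) = thn n from funext fun s => (etn_hasDeriv n s).deriv]
  exact thn_cont n

lemma etn_zero {n : ℕ} {s : ℝ} (hs : 0 ≤ s) (h : n * s ≤ 1) : etn n s = 0 := by
  unfold etn
  rw [intervalIntegral.integral_congr (g := fun _ => 0)]
  · simp
  · intro r hr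
    rw [uIcc_of_le hs] at hr
    have : (n : ℝ) * r ≤ n * s := by gcongr; exact hr.2
    simp only [thn]
    rw [max_eq_left (by linarith)]
    simp

lemma etn_nonneg {n : ℕ} {s : ℝ} (hs : 0 ≤ s) : 0 ≤ etn n s :=
  intervalIntegral.integral_nonneg hs fun r _ => thn_nonneg n r

lemma etn_le {n : ℕ} {s : ℝ} (hs : 0 ≤ s) : etn n s ≤ s := by
  have := intervalIntegral.integral_mono_on hs ((thn_cont n).intervalIntegrable 0 s)
    (continuous_const.intervalIntegrable (μ := volume) 0 s) (g := fun _ => (1 : ℝ))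
      fun r _ => thn_le n r
  simpa [etn] using this

lemma etn_tendsto {s : ℝ} (hs : 0 ≤ s) : Tendsto (fun n => etn n s) atTop (𝓝 s) := by
  have := intervalIntegral.tendsto_integral_filter_of_dominated_convergence (μ := volume)
    (F := fun n r => thn n r) (f := fun _ => (1 : ℝ)) (l := atTop) (a := 0) (b := s)
    (fun _ => (1 : ℝ))
    (Eventually.of_forall fun n => (thn_cont n).aestronglyMeasurable)
    (Eventually.of_forall fun n => Eventually.of_forall fun r _ => by
      rw [Real.norm_eq_abs, abs_of_nonneg (thn_nonneg n r)]; exact thn_le n r)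
    (continuous_const.intervalIntegrable _ _)
    (Eventually.of_forall fun r hr => by
      rw [uIoc_of_le hs] at hr
      exact thn_tendsto hr.1)
  simpa [etn] using this

lemma gradient_sq (u : ES N → ℝ) (x : ES N) :
    ‖gradient u x‖ ^ 2 = ∑ i : Fin N, (fderiv ℝ u x (EuclideanSpace.single i 1)) ^ 2 := by
  rw [EuclideanSpace.norm_sq_eq]
  refine Finset.sum_congr rfl fun i _ => ?_
  rw [Real.norm_eq_abs, sq_abs]
  congr 1
  have h : ⟪gradient u x, EuclideanSpace.single i (1 : ℝ)⟫_ℝ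
      = fderiv ℝ u x (EuclideanSpace.single i 1) := by
    unfold gradient
    rw [InnerProductSpace.toDual_symm_apply]
  rw [← h, EuclideanSpace.inner_single_right]
  simp

lemma energy_n {Ω : Set (ES N)} (hΩ : IsOpen Ω) (hΩb : Bornology.IsBounded Ω) {u g : ES N → ℝ}
    (huc : Continuous u) (hu0 : ∀ x, 0 ≤ u x) (huz : ∀ x ∉ Ω, u x = 0) (hu2 : ContDiffOn ℝ 2 u Ω)
    (hl : ∀ x ∈ Ω, -lapl u x = g x) (n : ℕ) :
    IntegrableOn (fun x => ‖gradient u x‖ ^ 2 * thn n (u x)) Ω ∧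
    ∫ x in Ω, ‖gradient u x‖ ^ 2 * thn n (u x) = ∫ x in Ω, g x * etn n (u x) := by
  set ψ : ES N → ℝ := fun x => etn n (u x) with hψ
  have hψz : ∀ x ∉ Ω, ψ x = 0 := fun x hx => etn_zero (hu0 x) (by rw [huz x hx]; simp)
  have hψs : tsupport ψ ⊆ Ω := by
    have h1 : tsupport ψ ⊆ {x | 1 ≤ n * u x} := by
      refine closure_minimal ?_ (isClosed_le continuous_const (by fun_prop))
      intro x hx
      by_contra h
      exact hx (etn_zero (hu0 x) (not_le.1 h).le)
    intro x hx
    by_contra h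
    have := h1 hx
    simp only [mem_ofPred_eq, huz x h, mul_zero] at this
    linarith
  have hψcs : HasCompactSupport ψ := cs_of_bdd hΩb hψz
  have hψd : ContDiff ℝ 1 ψ := by
    rw [contDiff_iff_contDiffAt]
    intro z
    by_cases hz : z ∈ Ω
    · exact (etn_contDiff n).contDiffAt.comp z
        ((hu2.contDiffAt (hΩ.mem_nhds hz)).of_le (by norm_num))
    · have : ψ =ᶠ[𝓝 z] fun _ => 0 := by
        filter_upwards [(isClosed_tsupport ψ).isOpen_compl.mem_nhds (fun h => hz (hψs h))] with y hy
        exact image_eq_zero_of_notMem_tsupport hy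
      exact contDiffAt_const.congr_of_eventuallyEq this
  have hψ1 : ∀ e, Continuous (fun x => fderiv ℝ ψ x e) := fun e => fderiv_dir_cont hψd e
  have hd1 : ∀ e, ContDiffOn ℝ 1 (fun x => fderiv ℝ u x e) Ω := fderiv_dir_contDiffOn hΩ hu2
  have hd1d : ∀ e, ∀ x ∈ Ω, DifferentiableAt ℝ (fun x => fderiv ℝ u x e) x := fun e x hx =>
    ((hd1 e).differentiableOn (by norm_num)).differentiableAt (hΩ.mem_nhds hx)
  have hd2 : ∀ e, ContinuousOn (fun x => fderiv ℝ (fun x => fderiv ℝ u x e) x e) Ω := fun e =>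
    ((hd1 e).continuousOn_fderiv_of_isOpen hΩ (by norm_num)).clm_apply continuousOn_const
  have hi2 : ∀ e, Integrable (fun x => fderiv ℝ u x e * fderiv ℝ ψ x e) := fun e =>
    mul_cont_int hΩ (hd1 e).continuousOn (hψ1 e) (fderiv_dir_cs hψcs e)
      ((fderiv_dir_tsupport _ _).trans hψs)
  have hi3 : ∀ e, Integrable (fun x => fderiv ℝ (fun x => fderiv ℝ u x e) x e * ψ x) := fun e =>
    mul_cont_int hΩ (hd2 e) hψd.continuous hψcs hψs
  have hi5 : ∀ e, Integrable (fun x => fderiv ℝ u x e * ψ x) := fun e =>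
    mul_cont_int hΩ (hd1 e).continuousOn hψd.continuous hψcs hψs
  have hibp : ∀ e, ∫ x, fderiv ℝ u x e * fderiv ℝ ψ x e
      = -∫ x, fderiv ℝ (fun x => fderiv ℝ u x e) x e * ψ x := fun e =>
    integral_mul_fderiv_eq_neg_fderiv_mul_of_integrable (hi3 e) (hi2 e) (hi5 e)
      (fun x hx => hd1d e x (hψs hx)) (fun x _ => hψd.differentiable (by simp) x)
  have hdψ : ∀ x ∈ Ω, ∀ e, fderiv ℝ ψ x e = thn n (u x) * fderiv ℝ u x e := by
    intro x hx e
    have hux : DifferentiableAt ℝ u x :=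
      (hu2.differentiableOn (by norm_num)).differentiableAt (hΩ.mem_nhds hx)
    have := (etn_hasDeriv n (u x)).comp_hasFDerivAt x hux.hasFDerivAt
    rw [show ψ = etn n ∘ u from rfl, this.fderiv]
    simp
  have hsum : ∀ x ∈ Ω, ‖gradient u x‖ ^ 2 * thn n (u x)
      = ∑ i : Fin N, fderiv ℝ u x (EuclideanSpace.single i 1)
        * fderiv ℝ ψ x (EuclideanSpace.single i 1) := by
    intro x hx
    rw [gradient_sq, Finset.sum_mul]
    refine Finset.sum_congr rfl fun i _ => ?_
    rw [hdψ x hx]; ring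
  have hintg : Integrable (fun x => ∑ i : Fin N, fderiv ℝ u x (EuclideanSpace.single i 1)
        * fderiv ℝ ψ x (EuclideanSpace.single i 1)) := integrable_finsetSum _ fun i _ => hi2 _
  refine ⟨hintg.integrableOn.congr_fun (fun x hx => (hsum x hx).symm) hΩ.measurableSet, ?_⟩
  rw [setIntegral_congr_fun hΩ.measurableSet hsum,
    setIntegral_eq_integral_of_forall_compl_eq_zero, integral_finsetSum _ fun i _ => hi2 _]
  · simp_rw [hibp]
    rw [Finset.sum_neg_distrib, ← integral_finsetSum _ fun i _ => hi3 _, ← integral_neg,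
      ← setIntegral_eq_integral_of_forall_compl_eq_zero (s := Ω)]
    · refine setIntegral_congr_fun hΩ.measurableSet fun x hx => ?_
      rw [← hl x hx, ← Finset.sum_mul]
      simp only [lapl, hψ]
      ring
    · intro x hx
      rw [← Finset.sum_mul, hψz x hx]; simp
  · intro x hx
    refine Finset.sum_eq_zero fun i _ => ?_
    have : x ∉ tsupport (fun x => fderiv ℝ ψ x (EuclideanSpace.single i 1)) := fun h =>
      hx (hψs (fderiv_dir_tsupport _ _ h))
    have h0 : fderiv ℝ ψ x (EuclideanSpace.single i 1) = 0 :=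
      image_eq_zero_of_notMem_tsupport (f := fun x => fderiv ℝ ψ x (EuclideanSpace.single i 1)) this
    rw [h0, mul_zero]

lemma toReal_eLpNorm_two {E : Type*} [NormedAddCommGroup E] {μ : Measure (ES N)} (f : ES N → E) :
    (eLpNorm f 2 μ).toReal ^ 2 = (∫⁻ x, ENNReal.ofReal (‖f x‖ ^ 2) ∂μ).toReal := by
  rw [eLpNorm_eq_lintegral_rpow_enorm_toReal (by norm_num) (by norm_num), ← ENNReal.toReal_pow,
    ← ENNReal.rpow_natCast, ← ENNReal.rpow_mul]
  norm_num

lemma energy {Ω : Set (ES N)} (hΩ : IsOpen Ω) (hΩb : Bornology.IsBounded Ω) {u g : ES N → ℝ}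
    (huc : Continuous u) (hu0 : ∀ x ∈ Ω, 0 < u x) (huz : ∀ x ∉ Ω, u x = 0)
    (hu2 : ContDiffOn ℝ 2 u Ω) (hg : BM g) (hg0 : ∀ x, 0 ≤ g x)
    (hl : ∀ x ∈ Ω, -lapl u x = g x) :
    (gradNorm2 Ω u) ^ 2 = ∫ x in Ω, g x * u x := by
  have hu0' : ∀ x, 0 ≤ u x := fun x => by
    by_cases h : x ∈ Ω
    · exact (hu0 x h).le
    · rw [huz x h]
  have hE := energy_n hΩ hΩb huc hu0' huz hu2 hl
  have hcs := cs_of_bdd hΩb huz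
  obtain ⟨hgm, C, hC⟩ := hg
  have hgradc : ContinuousOn (gradient u) Ω := by
    have h1 : ContinuousOn (fderiv ℝ u) Ω := hu2.continuousOn_fderiv_of_isOpen hΩ (by norm_num)
    exact (InnerProductSpace.toDual ℝ (ES N)).symm.continuous.comp_continuousOn h1
  have hbi : IntegrableOn (fun x => C * u x) Ω :=
    ((huc.integrable_of_hasCompactSupport hcs).const_mul C).integrableOn
  have hR : Tendsto (fun n => ∫ x in Ω, g x * etn n (u x)) atTop (𝓝 (∫ x in Ω, g x * u x)) := by
    refine tendsto_integral_of_dominated_convergence (fun x => C * u x) (fun n => ?_) hbi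
      (fun n => ?_) ?_
    · exact (hgm.mul ((etn_contDiff n).continuous.comp huc).measurable).aestronglyMeasurable
    · refine Eventually.of_forall fun x => ?_
      rw [norm_mul, Real.norm_eq_abs, Real.norm_eq_abs, abs_of_nonneg (etn_nonneg (hu0' x))]
      exact mul_le_mul (hC x) (etn_le (hu0' x)) (etn_nonneg (hu0' x)) ((abs_nonneg _).trans (hC x))
    · exact Eventually.of_forall fun x => (etn_tendsto (hu0' x)).const_mul _
  have hL : Tendsto (fun n => ∫⁻ x in Ω, ENNReal.ofReal (‖gradient u x‖ ^ 2 * thn n (u x))) atTop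
      (𝓝 (∫⁻ x in Ω, ENNReal.ofReal (‖gradient u x‖ ^ 2))) := by
    refine lintegral_tendsto_of_tendsto_of_monotone (fun n => ?_) ?_ ?_
    · exact (hE n).1.aestronglyMeasurable.aemeasurable.ennreal_ofReal
    · refine Eventually.of_forall fun x m n h => ?_
      exact ENNReal.ofReal_le_ofReal (mul_le_mul_of_nonneg_left (thn_mono (hu0' x) h)
        (sq_nonneg _))
    · refine (ae_restrict_iff' hΩ.measurableSet).2 (Eventually.of_forall fun x hx => ?_)
      have := (thn_tendsto (hu0 x hx)).const_mul (‖gradient u x‖ ^ 2)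
      rw [mul_one] at this
      exact (ENNReal.continuous_ofReal.tendsto _).comp this
  have hn : ∀ n, ∫⁻ x in Ω, ENNReal.ofReal (‖gradient u x‖ ^ 2 * thn n (u x))
      = ENNReal.ofReal (∫ x in Ω, g x * etn n (u x)) := by
    intro n
    rw [← (hE n).2, ofReal_integral_eq_lintegral_ofReal (hE n).1]
    exact Eventually.of_forall fun x => mul_nonneg (sq_nonneg _) (thn_nonneg _ _)
  simp_rw [hn] at hL
  have := tendsto_nhds_unique hL ((ENNReal.continuous_ofReal.tendsto _).comp hR)
  unfold gradNorm2
  rw [toReal_eLpNorm_two, this, ENNReal.toReal_ofReal]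
  exact integral_nonneg fun x => mul_nonneg (hg0 x) (hu0' x)

lemma LpNorm_two_sq {Ω : Set (ES N)} (hΩb : Bornology.IsBounded Ω) {u : ES N → ℝ}
    (huc : Continuous u) (huz : ∀ x ∉ Ω, u x = 0) :
    (LpNorm Ω 2 u) ^ 2 = ∫ x in Ω, u x ^ 2 := by
  have hcs := cs_of_bdd hΩb huz
  unfold LpNorm
  rw [toReal_eLpNorm_two]
  have hi : IntegrableOn (fun x => u x ^ 2) Ω := by
    have : Integrable (fun x => u x * u x) :=
      (huc.mul huc).integrable_of_hasCompactSupport hcs.mul_left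
    exact (this.congr (Eventually.of_forall fun x => by simp only; ring)).integrableOn
  have h0 : 0 ≤ ∫ x in Ω, u x ^ 2 := integral_nonneg fun x => sq_nonneg _
  rw [← ENNReal.toReal_ofReal h0, ofReal_integral_eq_lintegral_ofReal hi
    (Eventually.of_forall fun x => sq_nonneg _)]
  simp only [Real.norm_eq_abs, sq_abs]


/-! ### The nonlinear problem -/

/-- The standing data on the domain and its torsion function (extended by zero). -/
structure TD (Ω : Set (ES N)) (ξ0 : ES N → ℝ) : Prop where
  hN : 1 ≤ N
  ho : IsOpen Ω
  hb : Bornology.IsBounded Ω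
  hc : Continuous ξ0
  hz : ∀ x ∉ Ω, ξ0 x = 0
  h0 : ∀ x, 0 ≤ ξ0 x
  hm : MvSol Ω ξ0 (fun _ => 1)

/-- The order interval between zero and `t ξ0`. -/
structure Adm (ξ0 : ES N → ℝ) (t : ℝ) (v : ES N → ℝ) : Prop where
  hc : Continuous v
  h0 : ∀ x, 0 ≤ v x
  hle : ∀ x, v x ≤ t * ξ0 x

/-- Assumptions on the nonlinearity. -/
structure NL (F : ℝ → ℝ) (t X α : ℝ) : Prop where
  ht : 0 < t
  hX : 0 < X
  hα0 : 0 < α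
  hα1 : α < 1
  hc : Continuous F
  hmono : MonotoneOn F (Ici 0)
  hz : F 0 = 0
  hsup : F (t * X) ≤ t
  hsub : ∀ τ u, 0 < τ → τ ≤ 1 → 0 ≤ u → u ≤ t * X → τ ^ α * F u ≤ F (τ * u)
  hlow : ∀ K, 0 < K → ∃ ε, 0 < ε ∧ ∀ s, 0 ≤ s → s ≤ ε → K * s ≤ F s
  hC1 : ContDiffOn ℝ 1 F (Ioi 0)

lemma NL.nonneg {F : ℝ → ℝ} {t X α : ℝ} (h : NL F t X α) {s : ℝ} (hs : 0 ≤ s) : 0 ≤ F s := by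
  have := h.hmono (mem_Ici.2 le_rfl) (mem_Ici.2 hs) hs
  rwa [h.hz] at this

lemma Adm.zero {Ω : Set (ES N)} {ξ0 v : ES N → ℝ} {t : ℝ} (hT : TD Ω ξ0) (h : Adm ξ0 t v) :
    ∀ x ∉ Ω, v x = 0 := fun x hx =>
  le_antisymm (by have := h.hle x; rwa [hT.hz x hx, mul_zero] at this) (h.h0 x)

lemma Adm.bm {Ω : Set (ES N)} {ξ0 v : ES N → ℝ} {t : ℝ} (hT : TD Ω ξ0) (h : Adm ξ0 t v) : BM v :=
  BM.of_cs h.hc (cs_of_bdd hT.hb (h.zero hT))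

lemma Adm.le_tX {F : ℝ → ℝ} {ξ0 v : ES N → ℝ} {t X α : ℝ} (hF : NL F t X α)
    (hX : ∀ x, ξ0 x ≤ X) (h : Adm ξ0 t v) (x : ES N) : v x ≤ t * X :=
  (h.hle x).trans (mul_le_mul_of_nonneg_left (hX x) hF.ht.le)

lemma Adm.F_le {F : ℝ → ℝ} {ξ0 v : ES N → ℝ} {t X α : ℝ} (hF : NL F t X α)
    (hX : ∀ x, ξ0 x ≤ X) (h : Adm ξ0 t v) (x : ES N) : F (v x) ≤ t :=
  (hF.hmono (mem_Ici.2 (h.h0 x)) (mem_Ici.2 (mul_pos hF.ht hF.hX).le) (h.le_tX hF hX x)).trans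
    hF.hsup

lemma Adm.rhs_le {F : ℝ → ℝ} {ξ0 v : ES N → ℝ} {t X α M : ℝ} (hF : NL F t X α)
    (hX : ∀ x, ξ0 x ≤ X) (hM : 1 ≤ M) (h : Adm ξ0 t v) (x : ES N) : F (v x) / M ≤ t :=
  (div_le_self (hF.nonneg (h.h0 x)) hM).trans (h.F_le hF hX x)

lemma Adm.rhs_nonneg {F : ℝ → ℝ} {ξ0 v : ES N → ℝ} {t X α M : ℝ} (hF : NL F t X α)
    (hM : 1 ≤ M) (h : Adm ξ0 t v) (x : ES N) : 0 ≤ F (v x) / M :=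
  div_nonneg (hF.nonneg (h.h0 x)) (by linarith)

lemma Adm.rhs_bm {F : ℝ → ℝ} {ξ0 v : ES N → ℝ} {t X α M : ℝ} (hF : NL F t X α)
    (hX : ∀ x, ξ0 x ≤ X) (hM : 1 ≤ M) (h : Adm ξ0 t v) : BM fun x => F (v x) / M := by
  refine ⟨((hF.hc.comp h.hc).div_const M).measurable, t, fun x => ?_⟩
  rw [abs_of_nonneg (h.rhs_nonneg hF hM x)]
  exact h.rhs_le hF hX hM x

lemma mvsol_const_mul {Ω : Set (ES N)} {w g : ES N → ℝ} (a : ℝ) (h : MvSol Ω w g) :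
    MvSol Ω (fun x => a * w x) (fun x => a * g x) := by
  intro x hx r hr hb
  have := h x hx r hr hb
  simp only [Av] at this ⊢
  rw [Iv_const_mul, Pv_const_mul, this]
  ring

lemma TD.xi_adm {Ω : Set (ES N)} {ξ0 : ES N → ℝ} (hT : TD Ω ξ0) {t : ℝ} (ht : 0 < t) :
    Adm ξ0 t (fun x => t * ξ0 x) :=
  ⟨hT.hc.const_mul t |>.congr fun _ => rfl, fun x => mul_nonneg ht.le (hT.h0 x), fun _ => le_rfl⟩

lemma step_exists {Ω : Set (ES N)} {ξ0 : ES N → ℝ} (hT : TD Ω ξ0) {F : ℝ → ℝ} {t X α : ℝ}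
    (hF : NL F t X α) (hX : ∀ x, ξ0 x ≤ X) {M : ℝ} (hM : 1 ≤ M) {v : ES N → ℝ}
    (hv : Adm ξ0 t v) : ∃ w, Adm ξ0 t w ∧ MvSol Ω w (fun x => F (v x) / M) := by
  obtain ⟨w, _, hw0, hwle, hwc, hwm⟩ := poisson_exists hT.hN hT.ho hT.hb.measure_lt_top
    (hv.rhs_bm hF hX hM).1 (hv.rhs_nonneg hF hM) (hv.rhs_le hF hX hM)
    (BM.of_cs hT.hc (cs_of_bdd hT.hb hT.hz)) hT.h0 hT.hz hT.hm
  exact ⟨w, ⟨cont_of_dom hT.ho hT.hc hT.hz hw0 hwle hwc, hw0, hwle⟩, hwm⟩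

lemma max_sol {Ω : Set (ES N)} {ξ0 : ES N → ℝ} (hT : TD Ω ξ0) {F : ℝ → ℝ} {t X α : ℝ}
    (hF : NL F t X α) (hX : ∀ x, ξ0 x ≤ X) {M : ℝ} (hM : 1 ≤ M) :
    ∃ u, Adm ξ0 t u ∧ MvSol Ω u (fun x => F (u x) / M) ∧
      ∀ v g, Adm ξ0 t v → BM g → MvSol Ω v g → (∀ x ∈ Ω, g x ≤ F (v x) / M) → ∀ x, v x ≤ u x := by
  have hM0 : 0 < M := by linarith
  choose S hS1 hS2 using fun v : {v : ES N → ℝ // Adm ξ0 t v} => step_exists hT hF hX hM v.2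
  let sq : ℕ → {v : ES N → ℝ // Adm ξ0 t v} := fun n =>
    Nat.rec ⟨_, hT.xi_adm hF.ht⟩ (fun _ v => ⟨S v, hS1 v⟩) n
  have hs0 : ∀ x, (sq 0).1 x = t * ξ0 x := fun x => rfl
  have hss : ∀ n, (sq (n + 1)).1 = S (sq n) := fun n => rfl
  have hsm : ∀ n, MvSol Ω (sq (n + 1)).1 (fun x => F ((sq n).1 x) / M) := fun n => hS2 (sq n)
  have hcmp : ∀ (v g : ES N → ℝ) (n : ℕ), Adm ξ0 t v → BM g → MvSol Ω v g →
      (∀ x ∈ Ω, g x ≤ F ((sq n).1 x) / M) → ∀ x, v x ≤ (sq (n + 1)).1 x := by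
    intro v g n hv hg hm h
    exact comparison hT.hN hT.ho hT.hb hT.hc hT.hz hT.hm hv.hc (sq (n + 1)).2.hc (hv.zero hT)
      ((sq (n + 1)).2.zero hT) hg ((sq n).2.rhs_bm hF hX hM) hm (hsm n) h
  have hFM : ∀ a b, 0 ≤ a → a ≤ b → F a / M ≤ F b / M := fun a b ha hab =>
    div_le_div_of_nonneg_right (hF.hmono (mem_Ici.2 ha) (mem_Ici.2 (ha.trans hab)) hab) hM0.le
  have hanti : ∀ n x, (sq (n + 1)).1 x ≤ (sq n).1 x := by
    intro n
    induction n with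
    | zero => exact fun x => (sq 1).2.hle x
    | succ n ih =>
      exact hcmp _ _ n (sq (n + 2)).2 ((sq (n + 1)).2.rhs_bm hF hX hM) (hsm (n + 1))
        fun x _ => hFM _ _ ((sq (n + 1)).2.h0 x) (ih x)
  have hlim : ∀ x, Tendsto (fun n => (sq n).1 x) atTop (𝓝 (⨅ n, (sq n).1 x)) := fun x =>
    tendsto_atTop_ciInf (antitone_nat_of_succ_le fun n => hanti n x)
      ⟨0, by rintro _ ⟨n, rfl⟩; exact (sq n).2.h0 x⟩
  set u : ES N → ℝ := fun x => ⨅ n, (sq n).1 x with hu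
  have hu0 : ∀ x, 0 ≤ u x := fun x => ge_of_tendsto' (hlim x) fun n => (sq n).2.h0 x
  have hule : ∀ x, u x ≤ t * ξ0 x := fun x => le_of_tendsto' (hlim x) fun n => (sq n).2.hle x
  have hutX : ∀ x, u x ≤ t * X := fun x =>
    (hule x).trans (mul_le_mul_of_nonneg_left (hX x) hF.ht.le)
  have hum : Measurable u := measurable_of_tendsto_metrizable (fun n => (sq n).2.hc.measurable)
    (tendsto_pi_nhds.2 hlim)
  have hubm : BM u := ⟨hum, t * X, fun x => by rw [abs_of_nonneg (hu0 x)]; exact hutX x⟩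
  have hgbm : BM fun x => F (u x) / M := by
    refine ⟨(hF.hc.measurable.comp hum).div_const M, t, fun x => ?_⟩
    rw [abs_of_nonneg (div_nonneg (hF.nonneg (hu0 x)) hM0.le)]
    exact (hFM _ _ (hu0 x) (hule x)).trans ((hT.xi_adm hF.ht).rhs_le hF hX hM x)
  have humv : MvSol Ω u (fun x => F (u x) / M) := by
    intro x hx r hr hb
    have h1 : Tendsto (fun n => (sq (n + 1)).1 x) atTop (𝓝 (u x)) :=
      (hlim x).comp (tendsto_add_atTop_nat 1)
    have h2 : Tendsto (fun n => Av r (sq (n + 1)).1 x) atTop (𝓝 (Av r u x)) :=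
      Iv_dct (ker_rho hT.hN) (C := t * X) (fun n => (sq (n + 1)).2.hc.measurable)
        (fun n z => by
          rw [abs_of_nonneg ((sq (n + 1)).2.h0 z)]; exact (sq (n + 1)).2.le_tX hF hX z) hr.le
        fun z _ => (hlim z).comp (tendsto_add_atTop_nat 1)
    have h3 : Tendsto (fun n => Pv r (fun z => F ((sq n).1 z) / M) x) atTop
        (𝓝 (Pv r (fun z => F (u z) / M) x)) :=
      Pv_dct hT.hN (C := t) (fun n => ((sq n).2.rhs_bm hF hX hM).1)
        (fun n z => by
          rw [abs_of_nonneg ((sq n).2.rhs_nonneg hF hM z)]; exact (sq n).2.rhs_le hF hX hM z) hr.le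
        fun z _ => ((hF.hc.tendsto _).comp (hlim z)).div_const M
    refine tendsto_nhds_unique h1 ((h2.add h3).congr fun n => ?_)
    exact (hsm n x hx r hr hb).symm
  have huc : Continuous u := cont_of_dom hT.ho hT.hc hT.hz hu0 hule
    (mv_C1 hT.hN hT.ho hubm hgbm humv).continuousOn
  refine ⟨u, ⟨huc, hu0, hule⟩, humv, ?_⟩
  intro v g hv hg hm h
  have : ∀ n x, v x ≤ (sq n).1 x := by
    intro n
    induction n with
    | zero => exact hv.hle
    | succ n ih => exact hcmp v g n hv hg hm fun x hx => (h x hx).trans (hFM _ _ (hv.h0 x) (ih x))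
  exact fun x => ge_of_tendsto' (hlim x) fun n => this n x

lemma sol_cont {Ω : Set (ES N)} {ξ0 : ES N → ℝ} (hT : TD Ω ξ0) {F : ℝ → ℝ} {t X α : ℝ}
    (hF : NL F t X α) (hX : ∀ x, ξ0 x ≤ X) (u : ℝ → ES N → ℝ)
    (hu : ∀ M, 1 ≤ M → Adm ξ0 t (u M) ∧ MvSol Ω (u M) (fun x => F (u M x) / M) ∧
      ∀ v g, Adm ξ0 t v → BM g → MvSol Ω v g → (∀ x ∈ Ω, g x ≤ F (v x) / M) →
        ∀ x, v x ≤ u M x) (x : ES N) : ContinuousOn (fun M => u M x) (Ici 1) := by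
  set β : ℝ := 1 / (1 - α) with hβ
  have hα : 0 < 1 - α := by linarith [hF.hα1]
  have hβ0 : 0 < β := by positivity
  have hαβ : α * β = β - 1 := by rw [hβ]; field_simp; ring
  have hmono : ∀ M M', 1 ≤ M → M ≤ M' → u M' x ≤ u M x := by
    intro M M' hM hMM
    refine (hu M hM).2.2 _ _ (hu M' (hM.trans hMM)).1
      ((hu M' (hM.trans hMM)).1.rhs_bm hF hX (hM.trans hMM)) (hu M' (hM.trans hMM)).2.1
      (fun z _ => ?_) x
    exact div_le_div_of_nonneg_left (hF.nonneg ((hu M' (hM.trans hMM)).1.h0 z)) (by linarith) hMM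
  have hmono2 : ∀ M M', 1 ≤ M → M ≤ M' → (M / M') ^ β * u M x ≤ u M' x := by
    intro M M' hM hMM
    have hM0 : 0 < M := by linarith
    have hM'0 : 0 < M' := by linarith
    have hA := (hu M hM).1
    have hσ0 : 0 < M / M' := by positivity
    have hσ1 : M / M' ≤ 1 := (div_le_one hM'0).2 hMM
    have hτ0 : 0 < (M / M') ^ β := rpow_pos_of_pos hσ0 β
    have hτ1 : (M / M') ^ β ≤ 1 := rpow_le_one hσ0.le hσ1 hβ0.le
    set τ := (M / M') ^ β with hτ
    have hτα : τ ^ α * (M / M') = τ := by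
      rw [hτ, ← rpow_mul hσ0.le, mul_comm β α, hαβ, ← rpow_add_one hσ0.ne']
      ring_nf
    refine (hu M' (hM.trans hMM)).2.2 (fun z => τ * u M z) _
      ⟨hA.hc.const_mul τ |>.congr fun _ => rfl, fun z => mul_nonneg hτ0.le (hA.h0 z), fun z => ?_⟩
      ((hA.rhs_bm hF hX hM).const_mul τ) (mvsol_const_mul τ (hu M hM).2.1) (fun z _ => ?_) x
    · exact (mul_le_of_le_one_left (hA.h0 z) hτ1).trans (hA.hle z)
    · have h1 := hF.hsub τ (u M z) hτ0 hτ1 (hA.h0 z) (hA.le_tX hF hX z)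
      have h2 : τ * (F (u M z) / M) = τ ^ α * F (u M z) / M' := by
        conv_lhs => rw [← hτα]
        field_simp
      rw [h2]
      exact div_le_div_of_nonneg_right h1 hM'0.le
  intro M0 hM0
  have hM0' : (1 : ℝ) ≤ M0 := hM0
  have hp0 : (0 : ℝ) < M0 := by linarith
  have hr : Tendsto (fun M => (M0 / M) ^ β) (𝓝[Ici 1] M0) (𝓝 1) := by
    have h1 : ContinuousAt (fun M : ℝ => (M0 / M) ^ β) M0 :=
      (continuousAt_const.div continuousAt_id hp0.ne').rpow_const (Or.inr hβ0.le)
    have h2 := h1.tendsto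
    simp only [div_self hp0.ne', one_rpow] at h2
    exact h2.mono_left nhdsWithin_le_nhds
  have hlo : Tendsto (fun M => min 1 ((M0 / M) ^ β) * u M0 x) (𝓝[Ici 1] M0) (𝓝 (u M0 x)) := by
    have := ((tendsto_const_nhds (x := (1 : ℝ))).min hr).mul_const (u M0 x)
    simpa using this
  have hhi : Tendsto (fun M => max 1 ((M0 / M) ^ β) * u M0 x) (𝓝[Ici 1] M0) (𝓝 (u M0 x)) := by
    have := ((tendsto_const_nhds (x := (1 : ℝ))).max hr).mul_const (u M0 x)
    simpa using this
  have hu0 : 0 ≤ u M0 x := (hu M0 hM0').1.h0 x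
  refine tendsto_of_tendsto_of_tendsto_of_le_of_le' hlo hhi ?_ ?_
  · filter_upwards [self_mem_nhdsWithin] with M hM
    rcases le_total M0 M with h | h
    · exact (mul_le_mul_of_nonneg_right (min_le_right _ _) hu0).trans (hmono2 M0 M hM0' h)
    · exact (mul_le_of_le_one_left hu0 (min_le_left _ _)).trans (hmono M M0 hM h)
  · filter_upwards [self_mem_nhdsWithin] with M hM
    have hMp : 0 < M := by have : (1 : ℝ) ≤ M := hM; linarith
    rcases le_total M0 M with h | h
    · exact (hmono M0 M hM0' h).trans (le_mul_of_one_le_left hu0 (le_max_left _ _))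
    · refine le_trans ?_ (mul_le_mul_of_nonneg_right (le_max_right _ _) hu0)
      have h1 := hmono2 M M0 hM h
      have h2 : (M0 / M) ^ β * (M / M0) ^ β = 1 := by
        rw [← mul_rpow (by positivity) (by positivity), show M0 / M * (M / M0) = 1 by field_simp,
          one_rpow]
      calc u M x = (M0 / M) ^ β * ((M / M0) ^ β * u M x) := by rw [← mul_assoc, h2, one_mul]
        _ ≤ _ := mul_le_mul_of_nonneg_left h1 (rpow_nonneg (by positivity) _)


lemma fixed_point {Ω : Set (ES N)} {ξ0 : ES N → ℝ} (hT : TD Ω ξ0) {F : ℝ → ℝ} {t X α : ℝ}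
    (hF : NL F t X α) (hX : ∀ x, ξ0 x ≤ X) {c d : ℝ} (hc : 0 < c) (hd : 0 < d) :
    ∃ M u, 1 ≤ M ∧ Adm ξ0 t u ∧ MvSol Ω u (fun x => F (u x) / M) ∧
      (∀ v g, Adm ξ0 t v → BM g → MvSol Ω v g → (∀ x ∈ Ω, g x ≤ F (v x) / M) → ∀ x, v x ≤ u x) ∧
      1 + c * (∫ x in Ω, u x ^ 2) + d * (∫ x in Ω, F (u x) / M * u x) = M := by
  choose! u hu using fun M (hM : (1 : ℝ) ≤ M) => max_sol hT hF hX hM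
  have hcont := sol_cont hT hF hX u hu
  have hs0 : 0 < t * X := mul_pos hF.ht hF.hX
  have hvol : volume Ω ≠ ⊤ := hT.hb.measure_lt_top.ne
  have hfin : IsFiniteMeasure (volume.restrict Ω) := ⟨by simpa using hT.hb.measure_lt_top⟩
  have ha1 : ∀ M, 1 ≤ M → ∀ x, u M x ^ 2 ≤ (t * X) ^ 2 := fun M hM x =>
    pow_le_pow_left₀ ((hu M hM).1.h0 x) ((hu M hM).1.le_tX hF hX x) 2
  have ha2 : ∀ M, 1 ≤ M → ∀ x, F (u M x) / M * u M x ≤ t * (t * X) := fun M hM x =>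
    mul_le_mul ((hu M hM).1.rhs_le hF hX hM x) ((hu M hM).1.le_tX hF hX x) ((hu M hM).1.h0 x)
      hF.ht.le
  have hb1 : ∀ M, 1 ≤ M → ∀ x, 0 ≤ u M x ^ 2 := fun M hM x => sq_nonneg _
  have hb2 : ∀ M, 1 ≤ M → ∀ x, 0 ≤ F (u M x) / M * u M x := fun M hM x =>
    mul_nonneg ((hu M hM).1.rhs_nonneg hF hM x) ((hu M hM).1.h0 x)
  have hm1 : ∀ M, 1 ≤ M → Continuous fun x => u M x ^ 2 := fun M hM => (hu M hM).1.hc.pow 2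
  have hm2 : ∀ M, 1 ≤ M → Continuous fun x => F (u M x) / M * u M x := fun M hM =>
    ((hF.hc.comp (hu M hM).1.hc).div_const M).mul (hu M hM).1.hc
  have hC1 : ContinuousOn (fun M => ∫ x in Ω, u M x ^ 2) (Ici 1) := by
    refine continuousOn_of_dominated (bound := fun _ => (t * X) ^ 2)
      (fun M hM => (hm1 M hM).aestronglyMeasurable) (fun M hM => Eventually.of_forall fun x => ?_)
      (integrable_const _) (Eventually.of_forall fun x => (hcont x).pow 2)
    rw [Real.norm_eq_abs, abs_of_nonneg (hb1 M hM x)]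
    exact ha1 M hM x
  have hC2 : ContinuousOn (fun M => ∫ x in Ω, F (u M x) / M * u M x) (Ici 1) := by
    refine continuousOn_of_dominated (bound := fun _ => t * (t * X))
      (fun M hM => (hm2 M hM).aestronglyMeasurable) (fun M hM => Eventually.of_forall fun x => ?_)
      (integrable_const _) (Eventually.of_forall fun x => ?_)
    · rw [Real.norm_eq_abs, abs_of_nonneg (hb2 M hM x)]
      exact ha2 M hM x
    · refine ((hF.hc.comp_continuousOn (hcont x)).div continuousOn_id fun M hM => ?_).mul (hcont x)
      have : (1 : ℝ) ≤ M := hM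
      simp only [id]; linarith
  set V := volume.real Ω with hV
  have hV0 : 0 ≤ V := measureReal_nonneg
  have hconst : ∀ a : ℝ, ∫ _ in Ω, a = V * a := fun a => by simp [hV]
  have hI1 : ∀ M, 1 ≤ M → ∫ x in Ω, u M x ^ 2 ≤ V * (t * X) ^ 2 := fun M hM => by
    rw [← hconst]
    exact integral_mono_of_nonneg (Eventually.of_forall (hb1 M hM)) (integrable_const _)
      (Eventually.of_forall (ha1 M hM))
  have hI2 : ∀ M, 1 ≤ M → ∫ x in Ω, F (u M x) / M * u M x ≤ V * (t * (t * X)) := fun M hM => by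
    rw [← hconst]
    exact integral_mono_of_nonneg (Eventually.of_forall (hb2 M hM)) (integrable_const _)
      (Eventually.of_forall (ha2 M hM))
  have hJ1 : ∀ M, 1 ≤ M → 0 ≤ ∫ x in Ω, u M x ^ 2 := fun M hM => integral_nonneg (hb1 M hM)
  have hJ2 : ∀ M, 1 ≤ M → 0 ≤ ∫ x in Ω, F (u M x) / M * u M x := fun M hM =>
    integral_nonneg (hb2 M hM)
  set Mm : ℝ := 1 + c * (V * (t * X) ^ 2) + d * (V * (t * (t * X))) with hMm
  have hMm1 : 1 ≤ Mm := by
    have h1 : 0 ≤ c * (V * (t * X) ^ 2) := by positivity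
    have h2 : 0 ≤ d * (V * (t * (t * X))) := by have := hF.ht; positivity
    linarith
  set T : ℝ → ℝ := fun M =>
    1 + c * (∫ x in Ω, u M x ^ 2) + d * (∫ x in Ω, F (u M x) / M * u M x) - M with hTd
  have hTc : ContinuousOn T (Icc 1 Mm) :=
    (((continuousOn_const.add (continuousOn_const.mul hC1)).add
      (continuousOn_const.mul hC2)).sub continuousOn_id).mono Icc_subset_Ici_self
  have h0 : (0 : ℝ) ∈ Icc (T Mm) (T 1) := by
    constructor
    · have h1 := mul_le_mul_of_nonneg_left (hI1 Mm hMm1) hc.le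
      have h2 := mul_le_mul_of_nonneg_left (hI2 Mm hMm1) hd.le
      simp only [hTd]
      linarith
    · have h1 := mul_nonneg hc.le (hJ1 1 le_rfl)
      have h2 := mul_nonneg hd.le (hJ2 1 le_rfl)
      simp only [hTd]
      linarith
  obtain ⟨M, hM, hTM⟩ := intermediate_value_Icc' hMm1 hTc h0
  refine ⟨M, u M, hM.1, (hu M hM.1).1, (hu M hM.1).2.1, (hu M hM.1).2.2, ?_⟩
  simp only [hTd] at hTM
  linarith

lemma abstract_exists {Ω : Set (ES N)} {ξ0 : ES N → ℝ} (hT : TD Ω ξ0) {F : ℝ → ℝ} {t X α : ℝ}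
    (hF : NL F t X α) (hX : ∀ x, ξ0 x ≤ X) {c d : ℝ} (hc : 0 < c) (hd : 0 < d)
    {l : ℝ} (hl : 0 < l) {φ0 : ES N → ℝ} (hφc : Continuous φ0) (hφz : ∀ x ∉ Ω, φ0 x = 0)
    (hφ0 : ∀ x ∈ Ω, 0 < φ0 x) (hφ1 : ∀ x, φ0 x ≤ 1) (hφm : MvSol Ω φ0 (fun x => l * φ0 x)) :
    ∃ u : ES N → ℝ, Continuous u ∧ ContDiffOn ℝ 2 u Ω ∧
      (∀ x ∈ Ω, (-(1 + c * (LpNorm Ω 2 u) ^ 2 + d * (gradNorm2 Ω u) ^ 2)) * lapl u x = F (u x)) ∧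
      (∀ x ∈ Ω, 0 < u x) ∧ (∀ x ∉ Ω, u x = 0) := by
  obtain ⟨M, u, hM, hA, hmv, hmax, hfix⟩ := fixed_point hT hF hX hc hd
  have hM0 : 0 < M := by linarith
  have hφn : ∀ x, 0 ≤ φ0 x := fun x => by
    by_cases h : x ∈ Ω
    · exact (hφ0 x h).le
    · rw [hφz x h]
  obtain ⟨ε0, hε0, hlow⟩ := hF.hlow (l * M) (by positivity)
  set ε := min ε0 (t / l) with hε
  have hεp : 0 < ε := lt_min hε0 (div_pos hF.ht hl)
  have hεl : ε * l ≤ t := by rw [← le_div_iff₀ hl]; exact min_le_right _ _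
  have hψm : MvSol Ω (fun x => ε * φ0 x) (fun x => ε * (l * φ0 x)) := mvsol_const_mul ε hφm
  have hψc : Continuous (fun x => ε * φ0 x) := by fun_prop
  have hφb : BM φ0 := BM.of_cs hφc (cs_of_bdd hT.hb hφz)
  have hgb : BM (fun x => ε * (l * φ0 x)) := (hφb.const_mul l).const_mul ε
  have hψA : Adm ξ0 t (fun x => ε * φ0 x) := by
    refine ⟨hψc, fun x => mul_nonneg hεp.le (hφn x), ?_⟩
    have hAx := hT.xi_adm hF.ht
    refine comparison hT.hN hT.ho hT.hb hT.hc hT.hz hT.hm hψc hAx.hc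
      (fun x hx => by simp [hφz x hx]) (hAx.zero hT) hgb (BM.const (t * 1)) hψm
      (mvsol_const_mul t hT.hm) fun x _ => ?_
    have h1 : ε * l * φ0 x ≤ ε * l * 1 := mul_le_mul_of_nonneg_left (hφ1 x) (by positivity)
    linarith
  have hψu : ∀ x, ε * φ0 x ≤ u x := by
    refine hmax _ _ hψA hgb hψm fun x _ => ?_
    rw [le_div_iff₀ hM0]
    have := hlow (ε * φ0 x) (mul_nonneg hεp.le (hφn x))
      ((mul_le_of_le_one_right hεp.le (hφ1 x)).trans (min_le_left _ _))
    linarith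
  have hup : ∀ x ∈ Ω, 0 < u x := fun x hx => (mul_pos hεp (hφ0 x hx)).trans_le (hψu x)
  have hub : BM u := hA.bm hT
  have hgb' := hA.rhs_bm hF hX hM
  have hC1 : ContDiffOn ℝ 1 u Ω := mv_C1 hT.hN hT.ho hub hgb' hmv
  have hgC1 : ContDiffOn ℝ 1 (fun x => F (u x) / M) Ω :=
    (hF.hC1.comp hC1 fun x hx => hup x hx).div_const M
  have hC2 : ContDiffOn ℝ 2 u Ω := mv_C2 hT.hN hT.ho hub hmv hgC1
  have hlap := mv_lapl hT.hN hT.ho hub hgb' hmv hgC1.continuousOn hC2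
  have hE := energy hT.ho hT.hb hA.hc hup (hA.zero hT) hC2 hgb' (hA.rhs_nonneg hF hM) hlap
  have hL := LpNorm_two_sq hT.hb hA.hc (hA.zero hT)
  refine ⟨u, hA.hc, hC2, fun x hx => ?_, hup, hA.zero hT⟩
  rw [hE, hL, hfix]
  have := hlap x hx
  rw [eq_div_iff hM0.ne'] at this
  linarith

/-- the bound behind the sublinearity of the nonlinearity -/
lemma tau_bound {q p α τ : ℝ} (hqα : q < α) (hαp : α < p) (hτ : 0 < τ) :
    τ ^ α - τ ^ p ≤ (p - α) / (α - q) * (τ ^ q - τ ^ α) := by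
  have h1 : 0 < α - q := by linarith
  set y := Real.log τ with hy
  have hr : ∀ a, τ ^ a = Real.exp (y * a) := fun a => rpow_def_of_pos hτ a
  have e1 := Real.add_one_le_exp (y * (p - α))
  have e2 := Real.add_one_le_exp (y * (q - α))
  have ha : 0 < τ ^ α := rpow_pos_of_pos hτ α
  have e3 : τ ^ p = τ ^ α * Real.exp (y * (p - α)) := by
    rw [hr, hr, ← Real.exp_add]; ring_nf
  have e4 : τ ^ q = τ ^ α * Real.exp (y * (q - α)) := by
    rw [hr, hr, ← Real.exp_add]; ring_nf
  have h2 : 0 < p - α := by linarith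
  rw [e3, e4]
  calc τ ^ α - τ ^ α * Real.exp (y * (p - α)) ≤ τ ^ α * (-(y * (p - α))) := by nlinarith
    _ = (p - α) / (α - q) * (τ ^ α * (y * (q - α))) := by field_simp; ring
    _ ≤ _ := by
      refine mul_le_mul_of_nonneg_left ?_ (div_pos h2 h1).le
      nlinarith

lemma nl_exists {q p X : ℝ} (hq0 : 0 < q) (hq1 : q < 1) (hp : 1 < p) (hX : 0 < X) :
    ∃ μ₀ : ℝ, 0 < μ₀ ∧ ∀ μ : ℝ, 0 < μ → μ < μ₀ →
      ∃ t α, NL (fun s => μ * s ^ q + s ^ p) t X α := by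
  set α := (1 + q) / 2 with hα
  set L := 1 + (p - α) / (α - q) with hL
  have hαq : 0 < α - q := by rw [hα]; linarith
  have hαp : 0 < p - α := by rw [hα]; linarith
  have hL1 : 1 ≤ L := by have : 0 ≤ (p - α) / (α - q) := by positivity
                         linarith
  have h1q : 0 < 1 - q := by linarith
  set κ := (p - q) / (1 - q) with hκ
  have hκ1 : 0 < κ - 1 := by
    rw [hκ, sub_pos, lt_div_iff₀ h1q]; linarith
  set A := L * (2 * X) ^ κ with hA
  have hA0 : 0 < A := by positivity
  refine ⟨A⁻¹ ^ (1 / (κ - 1)), by positivity, fun μ hμ hμlt => ?_⟩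
  have hμκ : A * μ ^ (κ - 1) ≤ 1 := by
    have h1 : μ ^ (κ - 1) ≤ (A⁻¹ ^ (1 / (κ - 1))) ^ (κ - 1) :=
      rpow_le_rpow hμ.le hμlt.le hκ1.le
    rw [← rpow_mul (by positivity), one_div, inv_mul_cancel₀ hκ1.ne', rpow_one] at h1
    calc A * μ ^ (κ - 1) ≤ A * A⁻¹ := by gcongr
      _ = 1 := mul_inv_cancel₀ hA0.ne'
  set s0 := (2 * μ * X) ^ (1 / (1 - q)) with hs0
  have hs0p : 0 < s0 := by positivity
  have hs1q : s0 ^ (1 - q) = 2 * μ * X := by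
    rw [hs0, ← rpow_mul (by positivity), one_div, inv_mul_cancel₀ h1q.ne', rpow_one]
  have hspq : s0 ^ (p - q) = (2 * μ * X) ^ κ := by
    rw [hs0, ← rpow_mul (by positivity), hκ]; congr 1; ring
  have hkey : L * s0 ^ (p - q) ≤ μ := by
    have h1 : (2 * μ * X) ^ κ = (2 * X) ^ κ * (μ ^ (κ - 1) * μ) := by
      rw [← rpow_add_one hμ.ne', sub_add_cancel, ← mul_rpow (by positivity) hμ.le]; ring_nf
    rw [hspq, h1]
    calc L * ((2 * X) ^ κ * (μ ^ (κ - 1) * μ)) = A * μ ^ (κ - 1) * μ := by rw [hA]; ring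
      _ ≤ 1 * μ := by gcongr
      _ = μ := one_mul μ
  have hkey1 : s0 ^ (p - q) ≤ μ := by
    have : 0 ≤ s0 ^ (p - q) := by positivity
    nlinarith
  have htX : s0 / X * X = s0 := by field_simp
  refine ⟨s0 / X, α, ?_⟩
  constructor
  · positivity
  · exact hX
  · rw [hα]; linarith
  · rw [hα]; linarith
  · exact ((Real.continuous_rpow_const hq0.le).const_mul μ).add
      (Real.continuous_rpow_const (by linarith))
  · intro a ha b hb hab
    have ha' : (0 : ℝ) ≤ a := ha
    have hp0 : 0 ≤ p := by linarith
    show μ * a ^ q + a ^ p ≤ μ * b ^ q + b ^ p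
    gcongr
  · rw [zero_rpow hq0.ne', zero_rpow (by linarith)]; simp
  · rw [htX]
    have e1 : s0 ^ p = s0 ^ q * s0 ^ (p - q) := by rw [← rpow_add hs0p]; ring_nf
    have e2 : s0 ^ q * (2 * μ * X) = s0 := by
      rw [← hs1q, ← rpow_add hs0p]; simp
    have hsq : 0 < s0 ^ q := by positivity
    rw [e1, le_div_iff₀ hX]
    calc (μ * s0 ^ q + s0 ^ q * s0 ^ (p - q)) * X ≤ (μ * s0 ^ q + s0 ^ q * μ) * X := by gcongr
      _ = s0 ^ q * (2 * μ * X) := by ring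
      _ = s0 := e2
  · intro τ u hτ hτ1 hu hus
    rw [htX] at hus
    rcases hu.eq_or_lt with rfl | hu
    · rw [mul_zero, zero_rpow hq0.ne', zero_rpow (by linarith)]; simp
    have hpq : 0 ≤ p - q := by linarith
    have e1 : u ^ p = u ^ q * u ^ (p - q) := by rw [← rpow_add hu]; ring_nf
    have e2 : u ^ (p - q) ≤ s0 ^ (p - q) := by gcongr
    rw [mul_rpow hτ.le hu.le, mul_rpow hτ.le hu.le, e1]
    have huq : 0 < u ^ q := by positivity
    have hb := tau_bound (p := p) (show q < α by linarith) (show α < p by linarith) hτ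
    have hq' : τ ^ α ≤ τ ^ q := rpow_le_rpow_of_exponent_ge hτ hτ1 (by linarith)
    have hp' : τ ^ p ≤ τ ^ α := rpow_le_rpow_of_exponent_ge hτ hτ1 (by linarith)
    have e3 : u ^ (p - q) * (τ ^ α - τ ^ p) ≤ μ * (τ ^ q - τ ^ α) := by
      calc u ^ (p - q) * (τ ^ α - τ ^ p) ≤ s0 ^ (p - q) * (L * (τ ^ q - τ ^ α)) := by
            refine mul_le_mul e2 (hb.trans ?_) (by linarith) (by positivity)
            refine mul_le_mul_of_nonneg_right (by linarith) (by linarith)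
        _ = L * s0 ^ (p - q) * (τ ^ q - τ ^ α) := by ring
        _ ≤ _ := mul_le_mul_of_nonneg_right hkey (by linarith)
    have e4 := mul_le_mul_of_nonneg_left e3 huq.le
    nlinarith [e4]
  · intro K hK
    refine ⟨(μ / K) ^ (1 / (1 - q)), by positivity, fun s hs hsε => ?_⟩
    rcases hs.eq_or_lt with rfl | hs
    · rw [zero_rpow hq0.ne', zero_rpow (by linarith)]; simp
    have h1 : s ^ (1 - q) ≤ μ / K := by
      have := rpow_le_rpow hs.le hsε h1q.le
      rwa [← rpow_mul (by positivity), one_div, inv_mul_cancel₀ h1q.ne', rpow_one] at this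
    have h2 : s = s ^ q * s ^ (1 - q) := by rw [← rpow_add hs]; simp
    have h3 : 0 < s ^ q := by positivity
    have h4 : 0 < s ^ p := by positivity
    rw [le_div_iff₀ hK] at h1
    calc K * s = s ^ q * (s ^ (1 - q) * K) := by conv_lhs => rw [h2]
                                                 ring
      _ ≤ s ^ q * μ := by gcongr
      _ ≤ _ := by linarith
  · intro s hs
    have hs' : s ≠ 0 := (mem_Ioi.1 hs).ne'
    exact ((contDiffAt_const.mul (contDiffAt_id.rpow_const_of_ne hs')).add
      (contDiffAt_id.rpow_const_of_ne hs')).contDiffWithinAt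

lemma lapl_congr {Ω : Set (ES N)} (hΩ : IsOpen Ω) {u v : ES N → ℝ} (h : ∀ x ∈ Ω, u x = v x) :
    ∀ x ∈ Ω, lapl u x = lapl v x := by
  intro x hx
  unfold lapl
  refine Finset.sum_congr rfl fun i _ => ?_
  have h1 : (fun y => fderiv ℝ u y (EuclideanSpace.single i 1)) =ᶠ[𝓝 x]
      fun y => fderiv ℝ v y (EuclideanSpace.single i 1) := by
    filter_upwards [hΩ.mem_nhds hx] with y hy
    have : u =ᶠ[𝓝 y] v := by
      filter_upwards [hΩ.mem_nhds hy] with z hz using h z hz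
    rw [this.fderiv_eq]
  rw [h1.fderiv_eq]

lemma extend_zero {Ω : Set (ES N)} {ξ : ES N → ℝ}
    (h1 : ContinuousOn ξ (closure Ω)) (h5 : ∀ x ∈ frontier Ω, ξ x = 0) :
    Continuous (Ω.indicator ξ) ∧ (∀ x ∉ Ω, Ω.indicator ξ x = 0) ∧
      (∀ x ∈ Ω, Ω.indicator ξ x = ξ x) :=
  ⟨continuous_indicator h5 h1, fun _ hx => indicator_of_notMem hx _,
    fun _ hx => indicator_of_mem hx _⟩

lemma main_exists (hN : 1 ≤ N) {Ω : Set (ES N)}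
    (hΩo : IsOpen Ω) (hΩbd : Bornology.IsBounded Ω)
    {c d q p : ℝ} (hc : 0 < c) (hd : 0 < d) (hq0 : 0 < q) (hq1 : q < 1) (hp : 1 < p)
    {l : ℝ} {φ₁ : ES N → ℝ} (heig : IsFirstEigenpair Ω l φ₁)
    {ξ : ES N → ℝ} (hξ : IsTorsionFn Ω ξ) :
    ∃ μ₀ : ℝ, 0 < μ₀ ∧ ∀ μ : ℝ, 0 < μ → μ < μ₀ →
      ∃ u : ES N → ℝ,
        ContinuousOn u (closure Ω) ∧ ContDiffOn ℝ 2 u Ω ∧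
        (∀ x ∈ Ω, (-(1 + c * (LpNorm Ω 2 u) ^ 2 + d * (gradNorm2 Ω u) ^ 2)) * lapl u x
          = μ * u x ^ q + u x ^ p) ∧
        (∀ x ∈ Ω, 0 < u x) ∧
        (∀ x ∈ frontier Ω, u x = 0) := by
  obtain ⟨ξ1, ξ2, ξ3, ξ4, ξ5⟩ := hξ
  obtain ⟨hl, φa, φb, φc, φd, φe, φf⟩ := heig
  obtain ⟨x1, x2, x3⟩ := extend_zero ξ1 ξ5
  obtain ⟨f1, f2, f3⟩ := extend_zero φa φe
  have xb : BM (Ω.indicator ξ) := BM.of_cs x1 (cs_of_bdd hΩbd x2)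
  have fb : BM (Ω.indicator φ₁) := BM.of_cs f1 (cs_of_bdd hΩbd f2)
  have hT : TD Ω (Ω.indicator ξ) :=
    { hN := hN, ho := hΩo, hb := hΩbd, hc := x1, hz := x2
      h0 := fun x => indicator_nonneg ξ3 x
      hm := mv_of_C2 hN hΩo xb (BM.const 1) (ξ2.congr x3) fun x hx => by
        rw [lapl_congr hΩo x3 x hx, ξ4 x hx] }
  have hφm : MvSol Ω (Ω.indicator φ₁) (fun x => l * Ω.indicator φ₁ x) :=
    mv_of_C2 hN hΩo fb (fb.const_mul l) (φb.congr f3) fun x hx => by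
      rw [lapl_congr hΩo f3 x hx, φd x hx, f3 x hx]
  obtain ⟨C, hC⟩ := xb.2
  have hX : 0 < |C| + 1 := by positivity
  obtain ⟨μ₀, hμ₀, h⟩ := nl_exists hq0 hq1 hp hX
  refine ⟨μ₀, hμ₀, fun μ hμ hμlt => ?_⟩
  obtain ⟨t, α, hF⟩ := h μ hμ hμlt
  obtain ⟨u, u1, u2, u3, u4, u5⟩ := abstract_exists hT hF
    (fun x => by
      have h1 := (le_abs_self _).trans (hC x)
      have h2 := le_abs_self C
      linarith) hc hd hl f1 f2 (fun x hx => by rw [f3 x hx]; exact φc x hx)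
    (fun x => by
      by_cases hx : x ∈ Ω
      · rw [f3 x hx]; exact φf.2 ⟨x, subset_closure hx, rfl⟩
      · rw [f2 x hx]; exact zero_le_one) hφm
  refine ⟨u, u1.continuousOn, u2, u3, u4, fun x hx => u5 x ?_⟩
  rw [hΩo.frontier_eq] at hx
  exact hx.2


end Aux

/-- Theorem 2.2: for small `μ > 0`, the Kirchhoff–Carrier problem with concave-convex
nonlinearity `-(1 + c‖u‖₂² + d‖∇u‖₂²) Δu = μ u^q + u^p`, `u > 0` in `Ω`, `u = 0` on `∂Ω`,
has a classical solution. -/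
theorem stmt_5 {N : ℕ} (hN : 1 ≤ N) (Ω : Set (EuclideanSpace ℝ (Fin N)))
    (hΩo : IsOpen Ω) (hΩconn : IsConnected Ω) (hΩbd : Bornology.IsBounded Ω)
    (c d q p : ℝ) (hc : 0 < c) (hd : 0 < d) (hq0 : 0 < q) (hq1 : q < 1) (hp : 1 < p)
    (l : ℝ) (φ₁ : EuclideanSpace ℝ (Fin N) → ℝ) (heig : IsFirstEigenpair Ω l φ₁)
    (ξ : EuclideanSpace ℝ (Fin N) → ℝ) (hξ : IsTorsionFn Ω ξ) :
    ∃ μ₀ : ℝ, 0 < μ₀ ∧ ∀ μ : ℝ, 0 < μ → μ < μ₀ →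
      ∃ u : EuclideanSpace ℝ (Fin N) → ℝ,
        ContinuousOn u (closure Ω) ∧ ContDiffOn ℝ 2 u Ω ∧
        (∀ x ∈ Ω, (-(1 + c * (LpNorm Ω 2 u) ^ 2 + d * (gradNorm2 Ω u) ^ 2)) * lapl u x
          = μ * u x ^ q + u x ^ p) ∧
        (∀ x ∈ Ω, 0 < u x) ∧
        (∀ x ∈ frontier Ω, u x = 0) := by
  exact main_exists hN hΩo hΩbd hc hd hq0 hq1 hp heig hξ
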